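/- arXiv:2203.10915 — 2 statements merged into one kernel-verified Lean document; each statement's English description precedes it below -/
import Mathlib

section
/- Let s ∈ (1,3). Then for every Schwartz function φ on ℝ², ∫_{ℝ²} φ̂(x,t) (x⁴ + t²)^{−s/4} dx dt = ∫_{ℝ²} φ(ξ₁, ξ₂) · (2π^{s/4} |ξ₂|^{(s−2)/4} / Γ(s/4)) · [∫_ℝ e^{−2πi x ξ₁} |x|^{1−s/2} K_{(s−2)/4}(2π|ξ₂| x²) dx] dξ₁ dξ₂. That is, the distributional Fourier transform of f_s(x,t) = (x⁴+t²)^{−s/4} is represented by the function (ξ₁,ξ₂) ↦ (2π^{s/4}|ξ₂|^{(s−2)/4}/Γ(s/4)) ∫_ℝ e^{−2πixξ₁} |x|^{1−s/2} K_{(s−2)/4}(2π|ξ₂|x²) dx. -/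
/-!
With `g_r(x, t) = e^{-πr(x⁴ + t²)}`, the Gamma integral writes `Γ(s/4) π^{-s/4} f_s` as
`∫₀^∞ r^{s/4-1} g_r dr`. Integrating `φ̂` against this, exchanging the integrals, moving the Fourier
transform from `φ` to `g_r` and exchanging the integrals back leaves `∫₀^∞ r^{s/4-1} ĝ_r(ξ) dr`.
Both exchanges hold for `0 < s < 3`: the first because `f_s ≤ |x|^{-s/3} |t|^{-s/3}` by AM–GM, the
second by interpolating between the trivial bound on the Fourier transform of `e^{-πrx⁴}` and the
one coming from its derivative. As `ĝ_r` is explicit in `ξ₂`, the `r`-integral at fixed `x` is,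
up to powers of `|ξ₂|` and `|x|`, Macdonald's integral `∫₀^∞ t^{ν-1} e^{-t-w/t} dt` with
`ν = (s-2)/4` and `w = (π|ξ₂|x²)²`.

Macdonald's integral is a Bessel `K` because it and the power series of `I_{±ν}` solve the same
second-order equation in `w`, so that a suitable cross product is constant in `w`. The constant is
`1`-periodic in `ν` and equals `1` for `Re ν > 0`, by the limit `w → 0⁺`.
-/

open Filter Set MeasureTheory
open scoped Real Classical

/-- The modified Bessel function of the first kind
`I_ν(z) = Σ_{n=0}^∞ (z/2)^{ν+2n} / (n! Γ(n+ν+1))`, with the principal branch of powers.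
(When `ν` is a negative integer the terms with `n + ν + 1 ≤ 0` vanish, since Mathlib's
`Complex.Gamma` vanishes at nonpositive integers, implementing the convention that the sum
starts at `n = -ν`.) -/
noncomputable def besselI (ν z : ℂ) : ℂ :=
  ∑' n : ℕ, (z / 2) ^ (ν + 2 * (n : ℂ)) / ((n.factorial : ℂ) * Complex.Gamma ((n : ℂ) + ν + 1))

/-- The modified Bessel function of the second kind:
`K_ν = (π / (2 sin (νπ))) (I_{-ν} - I_ν)` for non-integer `ν`, and for integer `ν` the limit
of this expression as the order tends to `ν`. -/

noncomputable def besselK (ν z : ℂ) : ℂ :=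
  if ∃ n : ℤ, ν = (n : ℂ) then
    limUnder (nhdsWithin ν {ν}ᶜ)
      (fun μ => ((Real.pi : ℂ) / (2 * Complex.sin (μ * (Real.pi : ℂ)))) *
        (besselI (-μ) z - besselI μ z))
  else ((Real.pi : ℂ) / (2 * Complex.sin (ν * (Real.pi : ℂ)))) * (besselI (-ν) z - besselI ν z)

/-- The Korányi kernel `f_s(x,t) = (x⁴ + t²)^{-s/4}` on `ℝ²`. -/
noncomputable def koranyiKernel (s : ℝ) (p : ℝ × ℝ) : ℝ :=
  (p.1 ^ 4 + p.2 ^ 2) ^ (-(s / 4))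

/-- The Euclidean Fourier transform on `ℝ²`: `φ̂(ξ) = ∫ e^{-2πi⟨p,ξ⟩} φ(p) dp`. -/
noncomputable def fourier2 (φ : (ℝ × ℝ) → ℂ) (ξ : ℝ × ℝ) : ℂ :=
  ∫ p : ℝ × ℝ,
    Complex.exp (-2 * (Real.pi : ℂ) * Complex.I * ((p.1 : ℂ) * (ξ.1 : ℂ) + (p.2 : ℂ) * (ξ.2 : ℂ)))
      * φ p

/-! ### The Bessel–Clifford function -/

/-- The Bessel–Clifford function `C_ν(w) = Σ wⁿ / (n! Γ(ν + 1 + n))`: the entire function with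
`I_ν(z) = (z/2)^ν C_ν(z²/4)`. -/
noncomputable def besselClifford (ν w : ℂ) : ℂ :=
  Complex.regularizedHGFun 0 {ν + 1} w

lemma regularizedHGFunCoeff_zero_singleton (c : ℂ) (n : ℕ) :
    Complex.regularizedHGFunCoeff 0 {c} n = (n.factorial * Complex.Gamma (c + n))⁻¹ := by
  simp [Complex.regularizedHGFunCoeff]

lemma hasFPowerSeriesOnBall_besselClifford (ν : ℂ) :
    HasFPowerSeriesOnBall (besselClifford ν) (Complex.regularizedHGFunSeries 0 {ν + 1}) 0 ⊤ := by
  have hradius := Complex.radius_regularizedHGFunSeries_eq_top (a := 0) (b := {ν + 1}) (by simp)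
  exact hradius ▸ FormalMultilinearSeries.hasFPowerSeriesOnBall _ (by simp [hradius])

lemma hasSum_besselClifford (ν w : ℂ) :
    HasSum (fun n : ℕ ↦ w ^ n / (n.factorial * Complex.Gamma (ν + 1 + n)))
      (besselClifford ν w) := by
  simpa [regularizedHGFunCoeff_zero_singleton, div_eq_mul_inv] using
    (hasFPowerSeriesOnBall_besselClifford ν).hasSum (y := w) (by simp)

lemma besselClifford_zero (ν : ℂ) : besselClifford ν 0 = (Complex.Gamma (ν + 1))⁻¹ := by
  rw [← (hasSum_besselClifford ν 0).tsum_eq, tsum_eq_single 0 fun n hn ↦ by simp [hn]]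
  simp

lemma hasDerivAt_besselClifford (ν w : ℂ) :
    HasDerivAt (besselClifford ν) (besselClifford (ν + 1) w) w := by
  have hseries := hasFPowerSeriesOnBall_besselClifford ν
  have hdiff : DifferentiableAt ℂ (besselClifford ν) w :=
    hseries.differentiableOn.differentiableAt (by simp)
  have hsum := (hseries.fderiv.hasSum (y := w) (by simp)).mapL
    (ContinuousLinearMap.apply ℂ ℂ (1 : ℂ))
  have hterm (n : ℕ) : ContinuousLinearMap.apply ℂ ℂ (1 : ℂ)
      ((Complex.regularizedHGFunSeries 0 {ν + 1}).derivSeries n fun _ ↦ w) =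
      w ^ n / (n.factorial * Complex.Gamma (ν + 1 + 1 + n)) := by
    have hadd : ν + 1 + 1 + n = ν + 1 + (n + 1) := by ring
    simp [regularizedHGFunCoeff_zero_singleton, Nat.factorial_succ, hadd, field]
  simp only [hterm, zero_add, ContinuousLinearMap.apply_apply, fderiv_apply_one_eq_deriv] at hsum
  exact hdiff.hasDerivAt.congr_deriv (hsum.unique (hasSum_besselClifford (ν + 1) w))

/-- Termwise, this is `Γ(z + 1) = z Γ(z)` with `z = ν + 1 + n`. -/
lemma besselClifford_eq_add (ν w : ℂ) :
    besselClifford ν w = (ν + 1) * besselClifford (ν + 1) w + w * besselClifford (ν + 2) w := by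
  have hshift (n : ℕ) : ((n + 1 : ℕ) : ℂ) * w ^ (n + 1) /
      ((n + 1).factorial * Complex.Gamma (ν + 2 + (n + 1 : ℕ))) =
      w * (w ^ n / (n.factorial * Complex.Gamma (ν + 2 + 1 + n))) := by
    rw [show ν + 2 + (n + 1 : ℕ) = ν + 2 + 1 + n by push_cast; ring, Nat.factorial_succ,
      Nat.cast_mul, mul_assoc, mul_div_mul_left _ _ (Nat.cast_ne_zero.2 n.succ_ne_zero), pow_succ']
    ring
  have htail : HasSum (fun n : ℕ ↦ n * w ^ n / (n.factorial * Complex.Gamma (ν + 2 + n)))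
      (w * besselClifford (ν + 2) w) := by
    rw [← hasSum_nat_add_iff' 1]
    simp only [hshift, Finset.sum_range_one, Nat.cast_zero, zero_mul, zero_div, sub_zero]
    simpa only [add_assoc] using (hasSum_besselClifford (ν + 2) w).mul_left w
  have hterm (n : ℕ) : w ^ n / (n.factorial * Complex.Gamma (ν + 1 + n)) =
      (ν + 1) * (w ^ n / (n.factorial * Complex.Gamma (ν + 1 + 1 + n))) +
        n * w ^ n / (n.factorial * Complex.Gamma (ν + 2 + n)) := by
    have hGamma := Complex.one_div_Gamma_eq_self_mul_one_div_Gamma_add_one (ν + 1 + n)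
    rw [show ν + 1 + n + 1 = ν + 2 + (n : ℂ) by ring] at hGamma
    simp only [div_eq_mul_inv, mul_inv, hGamma, show ν + 1 + 1 = ν + 2 by ring]
    ring
  refine (hasSum_besselClifford ν w).unique ?_
  simp only [hterm]
  exact ((hasSum_besselClifford (ν + 1) w).mul_left (ν + 1)).add htail

lemma besselClifford_wronskian (ν w : ℂ) :
    besselClifford ν w * besselClifford (-ν - 1) w -
      w * besselClifford (-ν) w * besselClifford (ν + 1) w = -(Complex.sin (ν * π) / π) := by
  let W : ℂ → ℂ := fun w ↦ besselClifford ν w * besselClifford (-ν - 1) w -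
    w * besselClifford (-ν) w * besselClifford (ν + 1) w
  have hderiv (w : ℂ) : HasDerivAt W 0 w := by
    refine (((hasDerivAt_besselClifford ν w).mul (hasDerivAt_besselClifford (-ν - 1) w)).sub
      (((hasDerivAt_id w).mul (hasDerivAt_besselClifford (-ν) w)).mul
        (hasDerivAt_besselClifford (ν + 1) w))).congr_deriv ?_
    have hpos := besselClifford_eq_add ν w
    have hneg := besselClifford_eq_add (-ν - 1) w
    simp only [sub_add_cancel, show -ν - 1 + 2 = -ν + 1 by ring] at hneg
    simp only [id, Pi.mul_apply, sub_add_cancel, hpos, hneg, show ν + 1 + 1 = ν + 2 by ring]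
    ring
  have hconst : W w = W 0 := is_const_of_deriv_eq_zero (fun w ↦ (hderiv w).differentiableAt)
    (fun w ↦ (hderiv w).deriv) w 0
  calc W w = W 0 := hconst
    _ = (Complex.Gamma (-ν) * Complex.Gamma (1 - -ν))⁻¹ := by
      simp [W, besselClifford_zero, add_comm, mul_comm]
    _ = -(Complex.sin (ν * π) / π) := by
      rw [Complex.Gamma_mul_Gamma_one_sub, mul_neg, Complex.sin_neg, inv_div, neg_div, mul_comm ν]

lemma besselI_two_mul (ν : ℂ) {y : ℝ} (hy : 0 < y) :
    besselI ν (2 * y : ℝ) = (y : ℂ) ^ ν * besselClifford ν ((y ^ 2 : ℝ) : ℂ) := by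
  rw [besselI, ← (hasSum_besselClifford ν _).tsum_eq, ← tsum_mul_left]
  refine tsum_congr fun n ↦ ?_
  have hy' : (y : ℂ) ≠ 0 := mod_cast hy.ne'
  have hpow : (y : ℂ) ^ (2 * (n : ℂ)) = (y ^ 2) ^ n := by
    rw [← pow_mul, ← Complex.cpow_natCast]; push_cast; rfl
  rw [show ((2 * y : ℝ) : ℂ) / 2 = y by push_cast; ring, Complex.cpow_add _ _ hy', hpow,
    mul_div_assoc, show (n : ℂ) + ν + 1 = ν + 1 + n by ring]
  push_cast
  rfl

/-! ### The Macdonald integral -/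

/-- The weight `e^{-t-w/t}` of the Macdonald integral. -/
noncomputable def macdonaldWeight (w t : ℝ) : ℂ := (Real.exp (-t - w / t) : ℝ)

/-- The Macdonald integral `G_μ(w) = ∫₀^∞ t^{μ-1} e^{-t-w/t} dt`, as a Mellin transform; it is
`2 w^{μ/2} K_μ(2√w)`. -/
noncomputable def macdonaldIntegral (μ : ℂ) (w : ℝ) : ℂ := mellin (macdonaldWeight w) μ

lemma norm_macdonaldWeight (w t : ℝ) : ‖macdonaldWeight w t‖ = Real.exp (-t - w / t) := by
  rw [macdonaldWeight, Complex.norm_real, Real.norm_of_nonneg (Real.exp_pos _).le]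

lemma norm_macdonaldWeight_le_exp_neg {w t : ℝ} (hw : 0 ≤ w) (ht : 0 < t) :
    ‖macdonaldWeight w t‖ ≤ Real.exp (-t) := by
  rw [norm_macdonaldWeight]
  have : 0 ≤ w / t := by positivity
  gcongr
  linarith

lemma continuousOn_macdonaldWeight (w : ℝ) : ContinuousOn (macdonaldWeight w) (Ioi 0) :=
  Complex.continuous_ofReal.comp_continuousOn (Real.continuous_exp.comp_continuousOn
    (continuousOn_id.neg.sub (continuousOn_const.div continuousOn_id fun _ ht ↦ ht.ne')))

lemma aestronglyMeasurable_cpow_mul_macdonaldWeight (μ : ℂ) (w : ℝ) :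
    AEStronglyMeasurable (fun t : ℝ ↦ (t : ℂ) ^ μ * macdonaldWeight w t)
      (volume.restrict (Ioi 0)) := by
  refine ContinuousOn.aestronglyMeasurable (ContinuousOn.mul (fun t ht ↦ ?_)
    (continuousOn_macdonaldWeight w)) measurableSet_Ioi
  exact (Complex.continuousAt_ofReal_cpow_const t μ (Or.inr ht.ne')).continuousWithinAt

lemma macdonaldWeight_isBigO_atTop {w : ℝ} (hw : 0 ≤ w) :
    macdonaldWeight w =O[atTop] fun t ↦ Real.exp (-1 * t) := by
  refine Asymptotics.IsBigO.of_bound 1 ?_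
  filter_upwards [eventually_gt_atTop 0] with t ht
  simpa using norm_macdonaldWeight_le_exp_neg hw ht

lemma macdonaldWeight_isBigO_nhdsGT_zero {w : ℝ} (hw : 0 < w) (n : ℕ) :
    macdonaldWeight w =O[nhdsWithin 0 (Ioi 0)] fun t ↦ t ^ (-(-(n : ℝ))) := by
  refine Asymptotics.IsBigO.of_bound (n.factorial / w ^ n) ?_
  filter_upwards [self_mem_nhdsWithin] with t (ht : 0 < t)
  have hexp := Real.pow_div_factorial_le_exp (w / t) (by positivity) n
  have hpos : 0 < (w / t) ^ n / n.factorial := by positivity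
  rw [norm_macdonaldWeight, neg_neg, Real.rpow_natCast, Real.norm_of_nonneg (by positivity)]
  calc Real.exp (-t - w / t) ≤ Real.exp (-(w / t)) := Real.exp_le_exp.2 (by linarith)
    _ = (Real.exp (w / t))⁻¹ := Real.exp_neg _
    _ ≤ ((w / t) ^ n / n.factorial)⁻¹ := inv_anti₀ hpos hexp
    _ = n.factorial / w ^ n * t ^ n := by rw [div_pow]; field_simp

lemma mellinConvergent_macdonaldWeight {w : ℝ} (hw : 0 < w) (μ : ℂ) :
    MellinConvergent (macdonaldWeight w) μ := by
  obtain ⟨n, hn⟩ := exists_nat_gt (-μ.re)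
  exact mellinConvergent_of_isBigO_rpow_exp one_pos
    ((continuousOn_macdonaldWeight w).locallyIntegrableOn measurableSet_Ioi)
    (macdonaldWeight_isBigO_atTop hw.le) (macdonaldWeight_isBigO_nhdsGT_zero hw n) (by linarith)

lemma integrableOn_cpow_mul_macdonaldWeight {w : ℝ} (hw : 0 < w) (μ : ℂ) :
    IntegrableOn (fun t : ℝ ↦ (t : ℂ) ^ μ * macdonaldWeight w t) (Ioi 0) := by
  simpa [MellinConvergent] using mellinConvergent_macdonaldWeight hw (μ + 1)

lemma differentiableAt_macdonaldIntegral_left {w : ℝ} (hw : 0 < w) (μ : ℂ) :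
    DifferentiableAt ℂ (fun μ ↦ macdonaldIntegral μ w) μ := by
  obtain ⟨n, hn⟩ := exists_nat_gt (-μ.re)
  exact mellin_differentiableAt_of_isBigO_rpow_exp one_pos
    ((continuousOn_macdonaldWeight w).locallyIntegrableOn measurableSet_Ioi)
    (macdonaldWeight_isBigO_atTop hw.le) (macdonaldWeight_isBigO_nhdsGT_zero hw n) (by linarith)

/-- The substitution `t ↦ w / t`. -/
lemma macdonaldIntegral_eq_cpow_mul_neg {w : ℝ} (hw : 0 < w) (μ : ℂ) :
    macdonaldIntegral μ w = (w : ℂ) ^ μ * macdonaldIntegral (-μ) w := by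
  have hinv : macdonaldIntegral μ w = mellin (fun t ↦ macdonaldWeight w (w * t⁻¹)) μ := by
    refine setIntegral_congr_fun measurableSet_Ioi fun t (ht : 0 < t) ↦ ?_
    have : -(w * t⁻¹) - w / (w * t⁻¹) = -t - w / t := by field_simp; ring
    simp only [macdonaldWeight, this]
  rw [hinv, mellin_comp_inv (fun t ↦ macdonaldWeight w (w * t)) μ, mellin_comp_mul_left _ _ hw,
    neg_neg, smul_eq_mul, macdonaldIntegral]

lemma hasDerivAt_cpow_mul_macdonaldWeight (μ : ℂ) (w : ℝ) {t : ℝ} (ht : t ≠ 0) :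
    HasDerivAt (fun v ↦ (t : ℂ) ^ (μ - 1) * macdonaldWeight v t)
      (-((t : ℂ) ^ (μ - 1 - 1) * macdonaldWeight w t)) w := by
  have hexp : HasDerivAt (fun v : ℝ ↦ Real.exp (-t - v / t))
      (Real.exp (-t - w / t) * (-(1 / t))) w :=
    (((hasDerivAt_id w).div_const t).const_sub (-t)).exp
  refine ((hexp.ofReal_comp).const_mul ((t : ℂ) ^ (μ - 1))).congr_deriv ?_
  rw [Complex.cpow_sub (μ - 1) 1 (mod_cast ht), Complex.cpow_one, macdonaldWeight]
  push_cast
  ring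

lemma hasDerivAt_macdonaldIntegral {w : ℝ} (hw : 0 < w) (μ : ℂ) :
    HasDerivAt (macdonaldIntegral μ) (-macdonaldIntegral (μ - 1) w) w := by
  have hderiv := (hasDerivAt_integral_of_dominated_loc_of_deriv_le (𝕜 := ℝ)
    (μ := volume.restrict (Ioi (0 : ℝ))) (x₀ := w) (s := Ioi (w / 2))
    (F := fun v t ↦ (t : ℂ) ^ (μ - 1) * macdonaldWeight v t)
    (F' := fun v t ↦ -((t : ℂ) ^ (μ - 1 - 1) * macdonaldWeight v t))
    (bound := fun t ↦ ‖(t : ℂ) ^ (μ - 1 - 1) * macdonaldWeight (w / 2) t‖)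
    (Ioi_mem_nhds (by linarith))
    (Eventually.of_forall fun v ↦ aestronglyMeasurable_cpow_mul_macdonaldWeight _ v)
    (integrableOn_cpow_mul_macdonaldWeight hw _)
    (aestronglyMeasurable_cpow_mul_macdonaldWeight _ w).neg ?_
    (integrableOn_cpow_mul_macdonaldWeight (half_pos hw) _).norm ?_).2
  · refine hderiv.congr_deriv ?_
    rw [integral_neg]
    rfl
  · filter_upwards [ae_restrict_mem measurableSet_Ioi] with t (ht : 0 < t) v (hv : w / 2 < v)
    rw [norm_neg, norm_mul, norm_mul, norm_macdonaldWeight, norm_macdonaldWeight]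
    gcongr
  · filter_upwards [ae_restrict_mem measurableSet_Ioi] with t (ht : 0 < t) v _
    exact hasDerivAt_cpow_mul_macdonaldWeight μ v ht.ne'

/-- Obtained by differentiating `G_{-μ}(w) = w^{-μ} G_μ(w)`. -/
lemma macdonaldIntegral_add_one {w : ℝ} (hw : 0 < w) (μ : ℂ) :
    macdonaldIntegral (μ + 1) w = μ * macdonaldIntegral μ w + w * macdonaldIntegral (μ - 1) w := by
  have hw' : (w : ℂ) ≠ 0 := mod_cast hw.ne'
  have hpow : HasDerivAt (fun v : ℝ ↦ (v : ℂ) ^ (-μ)) (-μ * (w : ℂ) ^ (-μ - 1)) w := by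
    simpa using ((hasDerivAt_id (w : ℂ)).cpow_const (c := -μ)
      (Complex.ofReal_mem_slitPlane.2 hw)).comp_ofReal
  have hsymm : (fun v : ℝ ↦ (v : ℂ) ^ (-μ) * macdonaldIntegral μ v) =ᶠ[nhds w]
      macdonaldIntegral (-μ) := by
    filter_upwards [Ioi_mem_nhds hw] with v hv
    rw [macdonaldIntegral_eq_cpow_mul_neg hv (-μ), neg_neg]
  have hunique := (hpow.mul (hasDerivAt_macdonaldIntegral hw μ)).unique
    ((hasDerivAt_macdonaldIntegral hw (-μ)).congr_of_eventuallyEq hsymm)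
  rw [macdonaldIntegral_eq_cpow_mul_neg hw (-μ - 1), neg_sub, sub_neg_eq_add, add_comm 1 μ,
    Complex.cpow_sub _ _ hw', Complex.cpow_one] at hunique
  have hne : (w : ℂ) ^ (-μ) ≠ 0 := by simp [Complex.cpow_eq_zero_iff, hw']
  field_simp at hunique
  linear_combination hunique

lemma tendsto_macdonaldIntegral_nhdsGT_zero {μ : ℂ} (hμ : 0 < μ.re) :
    Tendsto (macdonaldIntegral μ) (nhdsWithin 0 (Ioi 0)) (nhds (Complex.Gamma μ)) := by
  rw [Complex.Gamma_eq_integral hμ, Complex.GammaIntegral]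
  refine tendsto_integral_filter_of_dominated_convergence
    (fun t ↦ Real.exp (-t) * t ^ (μ.re - 1)) (Eventually.of_forall fun w ↦
      aestronglyMeasurable_cpow_mul_macdonaldWeight _ w) ?_ (Real.GammaIntegral_convergent hμ) ?_
  · filter_upwards [self_mem_nhdsWithin] with w (hw : 0 < w)
    filter_upwards [ae_restrict_mem measurableSet_Ioi] with t (ht : 0 < t)
    rw [norm_smul, Complex.norm_cpow_eq_rpow_re_of_pos ht, mul_comm, Complex.sub_re,
      Complex.one_re]
    gcongr
    exact norm_macdonaldWeight_le_exp_neg hw.le ht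
  · filter_upwards with t
    have hcont : Continuous fun w ↦ (t : ℂ) ^ (μ - 1) • macdonaldWeight w t := by
      unfold macdonaldWeight
      fun_prop
    exact (hcont.tendsto' 0 _ (by simp [macdonaldWeight, mul_comm])).mono_left nhdsWithin_le_nhds

/-! ### The integral representation of `K_ν` -/

/-- The combination `C_ν G_{ν+1} + w C_{ν+1} G_ν` of the Bessel–Clifford function and the Macdonald
integral, which turns out to be constant both in `w` and in `ν`. -/
noncomputable def besselCrossProduct (ν : ℂ) (w : ℝ) : ℂ :=
  besselClifford ν w * macdonaldIntegral (ν + 1) w +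
    w * besselClifford (ν + 1) w * macdonaldIntegral ν w

lemma besselCrossProduct_add_one (ν : ℂ) {w : ℝ} (hw : 0 < w) :
    besselCrossProduct (ν + 1) w = besselCrossProduct ν w := by
  have hG := macdonaldIntegral_add_one hw (ν + 1)
  rw [add_sub_cancel_right] at hG
  rw [besselCrossProduct, besselCrossProduct, hG, besselClifford_eq_add ν, add_assoc ν,
    one_add_one_eq_two]
  ring

lemma hasDerivAt_besselCrossProduct (ν : ℂ) {w : ℝ} (hw : 0 < w) :
    HasDerivAt (besselCrossProduct ν) 0 w := by
  have hC := (hasDerivAt_besselClifford ν w).comp_ofReal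
  have hC' := (hasDerivAt_besselClifford (ν + 1) w).comp_ofReal
  have hid : HasDerivAt (fun v : ℝ ↦ (v : ℂ)) 1 w := Complex.ofRealCLM.hasDerivAt
  refine ((hC.mul (hasDerivAt_macdonaldIntegral hw (ν + 1))).add
    ((hid.mul hC').mul (hasDerivAt_macdonaldIntegral hw ν))).congr_deriv ?_
  simp only [Pi.mul_apply, macdonaldIntegral_add_one hw ν, besselClifford_eq_add ν,
    add_sub_cancel_right, show ν + 1 + 1 = ν + 2 by ring]
  ring

lemma tendsto_besselCrossProduct_nhdsGT_zero {ν : ℂ} (hν : 0 < ν.re) :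
    Tendsto (besselCrossProduct ν) (nhdsWithin 0 (Ioi 0)) (nhds 1) := by
  have hC (ν : ℂ) : Tendsto (fun w : ℝ ↦ besselClifford ν w) (nhdsWithin 0 (Ioi 0))
      (nhds (Complex.Gamma (ν + 1))⁻¹) := by
    have hcont := (hasDerivAt_besselClifford ν ((0 : ℝ) : ℂ)).comp_ofReal.continuousAt
    simpa [besselClifford_zero] using hcont.tendsto.mono_left nhdsWithin_le_nhds
  have hid : Tendsto (fun w : ℝ ↦ (w : ℂ)) (nhdsWithin 0 (Ioi 0)) (nhds 0) :=
    (Complex.continuous_ofReal.tendsto' 0 0 Complex.ofReal_zero).mono_left nhdsWithin_le_nhds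
  have hν' : 0 < (ν + 1).re := by simpa using hν.trans (lt_add_one _)
  have hlim := ((hC ν).mul (tendsto_macdonaldIntegral_nhdsGT_zero hν')).add
    ((hid.mul (hC (ν + 1))).mul (tendsto_macdonaldIntegral_nhdsGT_zero hν))
  rwa [zero_mul, zero_mul, add_zero,
    inv_mul_cancel₀ (Complex.Gamma_ne_zero_of_re_pos hν')] at hlim

lemma besselCrossProduct_eq_one (ν : ℂ) {w : ℝ} (hw : 0 < w) : besselCrossProduct ν w = 1 := by
  obtain ⟨n, hn⟩ := exists_nat_gt (-ν.re)
  have hshift : besselCrossProduct (ν + n) w = besselCrossProduct ν w := by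
    clear hn
    induction n with
    | zero => simp
    | succ n ih =>
      rw [Nat.cast_succ, ← add_assoc, besselCrossProduct_add_one _ hw, ih]
  have hre : 0 < (ν + n).re := by simp; linarith
  obtain ⟨a, ha⟩ := isOpen_Ioi.exists_is_const_of_deriv_eq_zero isPreconnected_Ioi
    (fun v hv ↦ (hasDerivAt_besselCrossProduct (ν + n) hv).differentiableAt.differentiableWithinAt)
    fun v hv ↦ (hasDerivAt_besselCrossProduct (ν + n) hv).deriv
  have hlim : Tendsto (besselCrossProduct (ν + n)) (nhdsWithin 0 (Ioi 0)) (nhds a) :=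
    tendsto_const_nhds.congr' (eventually_nhdsWithin_of_forall fun v hv ↦ (ha v hv).symm)
  rw [← hshift, ha w hw]
  exact tendsto_nhds_unique hlim (tendsto_besselCrossProduct_nhdsGT_zero hre)

/-- The cross products for `ν` and `-ν - 1` are two linear equations for `G_ν` and `G_{ν+1}`, with
determinant the Wronskian of `C_ν` and `C_{-ν}`. -/
lemma sin_mul_macdonaldIntegral (ν : ℂ) {w : ℝ} (hw : 0 < w) :
    Complex.sin (ν * π) * macdonaldIntegral ν w =
      π * (besselClifford (-ν) w - (w : ℂ) ^ ν * besselClifford ν w) := by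
  have hw' : (w : ℂ) ≠ 0 := mod_cast hw.ne'
  have hpi : (π : ℂ) ≠ 0 := mod_cast Real.pi_ne_zero
  have hcross := besselCrossProduct_eq_one ν hw
  have hcross_neg : besselClifford (-ν - 1) w * macdonaldIntegral ν w +
      besselClifford (-ν) w * macdonaldIntegral (ν + 1) w = (w : ℂ) ^ ν := by
    have hneg := besselCrossProduct_eq_one (-ν - 1) hw
    rw [besselCrossProduct, sub_add_cancel, show -ν - 1 = -(ν + 1) by ring] at hneg
    rw [macdonaldIntegral_eq_cpow_mul_neg hw ν, macdonaldIntegral_eq_cpow_mul_neg hw (ν + 1),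
      Complex.cpow_add _ _ hw', Complex.cpow_one, show -ν - 1 = -(ν + 1) by ring]
    linear_combination (w : ℂ) ^ ν * hneg
  rw [besselCrossProduct] at hcross
  have hwronskian := besselClifford_wronskian ν w
  field_simp at hwronskian
  linear_combination π * besselClifford (-ν) w * hcross - π * besselClifford ν w * hcross_neg
    + macdonaldIntegral ν w * hwronskian

lemma besselI_neg_sub_besselI {ν : ℂ} (hν : Complex.sin (ν * π) ≠ 0) {y : ℝ} (hy : 0 < y) :
    (π : ℂ) / (2 * Complex.sin (ν * π)) * (besselI (-ν) (2 * y : ℝ) - besselI ν (2 * y : ℝ)) =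
      (y : ℂ) ^ (-ν) * macdonaldIntegral ν (y ^ 2) / 2 := by
  have hy' : (y : ℂ) ≠ 0 := mod_cast hy.ne'
  have hsq : ((y ^ 2 : ℝ) : ℂ) ^ ν = (y : ℂ) ^ ν * (y : ℂ) ^ ν := by
    rw [sq, Complex.ofReal_mul, Complex.mul_cpow_ofReal_nonneg hy.le hy.le]
  have hinv : (y : ℂ) ^ (-ν) * (y : ℂ) ^ ν = 1 := by simp [← Complex.cpow_add _ _ hy']
  have hG := sin_mul_macdonaldIntegral ν (pow_pos hy 2)
  rw [hsq] at hG
  rw [besselI_two_mul _ hy, besselI_two_mul _ hy, div_mul_eq_mul_div,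
    div_eq_div_iff (mul_ne_zero two_ne_zero hν) two_ne_zero]
  linear_combination 2 * π * (y : ℂ) ^ ν * besselClifford ν (y ^ 2 : ℝ) * hinv
    - 2 * (y : ℂ) ^ (-ν) * hG

lemma eventually_sin_mul_pi_ne_zero (ν : ℂ) :
    ∀ᶠ μ in nhdsWithin ν {ν}ᶜ, Complex.sin (μ * π) ≠ 0 := by
  have hanalytic : AnalyticOnNhd ℂ (fun μ ↦ Complex.sin (μ * π)) univ := fun μ _ ↦ by fun_prop
  refine (hanalytic ν (mem_univ _)).eventually_eq_zero_or_eventually_ne_zero.resolve_left fun h ↦ ?_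
  have hzero := hanalytic.eqOn_zero_of_preconnected_of_eventuallyEq_zero isPreconnected_univ
    (mem_univ ν) h
  have hhalf : Complex.sin (1 / 2 * π) = 0 := hzero (mem_univ (1 / 2))
  rw [one_div_mul_eq_div, Complex.sin_pi_div_two] at hhalf
  exact one_ne_zero hhalf

/-- For integer `ν` the limit defining `K_ν` is found from the continuity of the Macdonald integral
in its order. -/
lemma besselK_two_mul (ν : ℂ) {y : ℝ} (hy : 0 < y) :
    besselK ν (2 * y : ℝ) = (y : ℂ) ^ (-ν) * macdonaldIntegral ν (y ^ 2) / 2 := by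
  by_cases hint : ∃ n : ℤ, ν = n
  · rw [besselK, if_pos hint]
    have hcont : ContinuousAt (fun μ ↦ (y : ℂ) ^ (-μ) * macdonaldIntegral μ (y ^ 2) / 2) ν :=
      (((continuousAt_const_cpow (mod_cast hy.ne')).comp continuousAt_neg).mul
        (differentiableAt_macdonaldIntegral_left (pow_pos hy 2) ν).continuousAt).div_const 2
    refine ((hcont.tendsto.mono_left nhdsWithin_le_nhds).congr' ?_).limUnder_eq
    filter_upwards [eventually_sin_mul_pi_ne_zero ν] with μ hμ
    exact (besselI_neg_sub_besselI hμ hy).symm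
  · rw [besselK, if_neg hint]
    refine besselI_neg_sub_besselI (fun hsin ↦ hint ?_) hy
    obtain ⟨n, hn⟩ := Complex.sin_eq_zero_iff.1 hsin
    exact ⟨n, mul_right_cancel₀ (mod_cast Real.pi_ne_zero) hn⟩
/-! ### Schwartz functions against negative powers -/

lemma integrable_abs_rpow_mul_inv_one_add_sq {β : ℝ} (hβ : -1 < β) (hβ₀ : β ≤ 0) :
    Integrable fun t : ℝ ↦ |t| ^ β * (1 + t ^ 2)⁻¹ := by
  have hlocal : LocallyIntegrable fun t : ℝ ↦ |t| ^ β :=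
    locallyIntegrable_of_norm_le_rpow (C := 1) (α := -β) (by simp)
      (by rw [Module.finrank_self]; push_cast; linarith)
      (Eventually.of_forall fun t ↦ by
        rw [Real.norm_of_nonneg (by positivity), one_mul, neg_neg, Real.norm_eq_abs])
      (by fun_prop : Measurable fun t : ℝ ↦ |t| ^ β).aestronglyMeasurable
  have hnear : Integrable ((Icc (-1) 1).indicator fun t : ℝ ↦ |t| ^ β) :=
    (hlocal.integrableOn_isCompact isCompact_Icc).integrable_indicator measurableSet_Icc
  refine (hnear.add integrable_inv_one_add_sq).mono' (by fun_prop) (Eventually.of_forall fun t ↦ ?_)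
  have hinv : (1 + t ^ 2)⁻¹ ≤ 1 := inv_le_one_of_one_le₀ (by nlinarith [sq_nonneg t])
  rw [Real.norm_of_nonneg (by positivity), Pi.add_apply]
  by_cases ht : t ∈ Icc (-1 : ℝ) 1
  · rw [indicator_of_mem ht]
    exact (mul_le_of_le_one_right (by positivity) hinv).trans
      (le_add_of_nonneg_right (by positivity))
  · rw [indicator_of_notMem ht, zero_add]
    have hone : 1 ≤ |t| := le_of_not_ge fun hle ↦ ht (abs_le.1 hle)
    exact mul_le_of_le_one_left (by positivity) (Real.rpow_le_one_of_one_le_of_nonpos hone hβ₀)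

section Schwartz

variable {F : Type*} [NormedAddCommGroup F] [NormedSpace ℝ F] (φ : SchwartzMap (ℝ × ℝ) F)

lemma exists_norm_schwartzMap_le_mul_inv_one_add_sq :
    ∃ C : ℝ, ∀ ξ : ℝ × ℝ, ‖φ ξ‖ ≤ C * ((1 + ξ.1 ^ 2)⁻¹ * (1 + ξ.2 ^ 2)⁻¹) := by
  refine ⟨2 ^ 4 * (Finset.Iic ((4, 0) : ℕ × ℕ)).sup
    (fun m ↦ SchwartzMap.seminorm ℝ m.1 m.2) φ, fun ξ ↦ ?_⟩
  have hdecay := SchwartzMap.one_add_le_sup_seminorm_apply (𝕜 := ℝ) (m := (4, 0)) le_rfl le_rfl φ ξ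
  rw [norm_iteratedFDeriv_zero] at hdecay
  have hfactor {a : ℝ} (ha : |a| ≤ ‖ξ‖) : 1 + a ^ 2 ≤ (1 + ‖ξ‖) ^ 2 := by
    rw [← sq_abs]
    nlinarith [abs_nonneg a]
  rw [← mul_inv, ← div_eq_mul_inv, le_div_iff₀ (by positivity), mul_comm]
  calc (1 + ξ.1 ^ 2) * (1 + ξ.2 ^ 2) * ‖φ ξ‖
      ≤ (1 + ‖ξ‖) ^ 2 * (1 + ‖ξ‖) ^ 2 * ‖φ ξ‖ := by
        gcongr
        exacts [hfactor (norm_fst_le ξ), hfactor (norm_snd_le ξ)]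
    _ = (1 + ‖ξ‖) ^ 4 * ‖φ ξ‖ := by ring
    _ ≤ _ := hdecay

lemma integrable_norm_schwartzMap_mul_abs_rpow {β : ℝ} (hβ : -1 < β) (hβ₀ : β ≤ 0) :
    Integrable fun ξ : ℝ × ℝ ↦ ‖φ ξ‖ * (|ξ.1| ^ β * |ξ.2| ^ β) := by
  obtain ⟨C, hC⟩ := exists_norm_schwartzMap_le_mul_inv_one_add_sq φ
  have hweight := integrable_abs_rpow_mul_inv_one_add_sq hβ hβ₀
  refine ((hweight.mul_prod hweight).const_mul C).mono' ?_ (Eventually.of_forall fun ξ ↦ ?_)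
  · exact φ.continuous.norm.aestronglyMeasurable.mul
      (by fun_prop : Measurable fun ξ : ℝ × ℝ ↦ |ξ.1| ^ β * |ξ.2| ^ β).aestronglyMeasurable
  · rw [Real.norm_of_nonneg (by positivity)]
    calc ‖φ ξ‖ * (|ξ.1| ^ β * |ξ.2| ^ β)
        ≤ C * ((1 + ξ.1 ^ 2)⁻¹ * (1 + ξ.2 ^ 2)⁻¹) * (|ξ.1| ^ β * |ξ.2| ^ β) := by
          gcongr
          exact hC ξ
      _ = _ := by ring

end Schwartz

/-! ### The Fourier transform on the line and on the plane -/

open scoped FourierTransform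

lemma fourier_eq_integral_exp_mul (f : ℝ → ℂ) (a : ℝ) :
    𝓕 f a = ∫ x : ℝ, Complex.exp (-2 * (π : ℂ) * Complex.I * (x : ℂ) * (a : ℂ)) * f x := by
  rw [Real.fourier_real_eq_integral_exp_smul]
  refine integral_congr_ae (Eventually.of_forall fun x ↦ ?_)
  simp only [smul_eq_mul]
  push_cast
  ring_nf

lemma fourier2_eq_fourier (f : ℝ × ℝ → ℂ) (ξ : ℝ × ℝ) :
    fourier2 f ξ = 𝓕 (fun v : WithLp 2 (ℝ × ℝ) ↦ f v.ofLp) (WithLp.toLp 2 ξ) := by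
  rw [Real.fourier_eq', ← (WithLp.volume_preserving_toLp ℝ ℝ).integral_comp
    (MeasurableEquiv.toLp 2 (ℝ × ℝ)).measurableEmbedding, fourier2]
  refine integral_congr_ae (Eventually.of_forall fun p ↦ ?_)
  simp only [smul_eq_mul, WithLp.prod_inner_apply, RCLike.inner_apply, conj_trivial]
  push_cast
  ring_nf

lemma exists_schwartzMap_eq_fourier2 (φ : SchwartzMap (ℝ × ℝ) ℂ) :
    ∃ ψ : SchwartzMap (ℝ × ℝ) ℂ, ⇑ψ = fourier2 φ := by
  let e := WithLp.prodContinuousLinearEquiv 2 ℝ ℝ ℝ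
  refine ⟨SchwartzMap.compCLMOfContinuousLinearEquiv ℂ e.symm
    (𝓕 (SchwartzMap.compCLMOfContinuousLinearEquiv ℂ e φ)), funext fun ξ ↦ ?_⟩
  rw [fourier2_eq_fourier]
  rfl

lemma integral_fourier2_mul {f g : ℝ × ℝ → ℂ} (hf : Integrable f) (hg : Integrable g) :
    ∫ p, fourier2 f p * g p = ∫ ξ, f ξ * fourier2 g ξ := by
  have htransport (h : WithLp 2 (ℝ × ℝ) → ℂ) : ∫ p, h (WithLp.toLp 2 p) = ∫ v, h v :=
    (WithLp.volume_preserving_toLp ℝ ℝ).integral_comp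
      (MeasurableEquiv.toLp 2 (ℝ × ℝ)).measurableEmbedding h
  have hofLp {h : ℝ × ℝ → ℂ} (hh : Integrable h) :
      Integrable fun v : WithLp 2 (ℝ × ℝ) ↦ h v.ofLp :=
    (WithLp.volume_preserving_ofLp ℝ ℝ).integrable_comp_of_integrable hh
  have hself := VectorFourier.integral_fourierIntegral_smul_eq_flip (L := innerₗ (WithLp 2 (ℝ × ℝ)))
    Real.continuous_fourierChar continuous_inner (hofLp hf) (hofLp hg)
  rw [flip_innerₗ] at hself
  simp only [fourier2_eq_fourier]
  exact (htransport _).trans (hself.trans (htransport _).symm)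

lemma fourier2_mul (f g : ℝ → ℂ) (ξ : ℝ × ℝ) :
    fourier2 (fun p ↦ f p.1 * g p.2) ξ = 𝓕 f ξ.1 * 𝓕 g ξ.2 := by
  rw [fourier_eq_integral_exp_mul, fourier_eq_integral_exp_mul, ← integral_prod_mul, fourier2]
  refine integral_congr_ae (Eventually.of_forall fun p ↦ ?_)
  simp only [mul_add, Complex.exp_add]
  ring_nf

/-! ### Integrals of powers against exponentials -/

lemma integrableOn_rpow_mul_exp_neg_div {q b : ℝ} (hq : q < -1) (hb : 0 < b) :
    IntegrableOn (fun r : ℝ ↦ r ^ q * Real.exp (-(b / r))) (Ioi 0) := by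
  have hexp := integrableOn_rpow_mul_exp_neg_mul_rpow (p := 1) (s := -q - 2) (by linarith)
    one_pos hb
  rw [← integrableOn_Ioi_comp_rpow_iff' _ (p := -1) (by norm_num)] at hexp
  refine hexp.congr_fun (fun r (hr : 0 < r) ↦ ?_) measurableSet_Ioi
  simp only [smul_eq_mul, Real.rpow_one]
  rw [← Real.rpow_mul hr.le, ← mul_assoc, ← Real.rpow_add hr, Real.rpow_neg_one, div_eq_mul_inv]
  ring_nf

lemma integral_rpow_mul_exp_neg_div {q b : ℝ} (hq : q < -1) (hb : 0 < b) :
    ∫ r in Ioi (0 : ℝ), r ^ q * Real.exp (-(b / r)) = b ^ (q + 1) * Real.Gamma (-(q + 1)) := by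
  have hgamma := Real.integral_rpow_mul_exp_neg_mul_Ioi (a := -(q + 1)) (by linarith) hb
  rw [one_div, Real.inv_rpow hb.le, Real.rpow_neg hb.le, inv_inv,
    ← integral_comp_rpow_Ioi _ (p := -1) (by norm_num)] at hgamma
  rw [← hgamma]
  refine setIntegral_congr_fun measurableSet_Ioi fun r (hr : 0 < r) ↦ ?_
  simp only [smul_eq_mul]
  rw [← Real.rpow_mul hr.le, ← mul_assoc, abs_neg, abs_one, one_mul, ← Real.rpow_add hr,
    Real.rpow_neg_one, div_eq_mul_inv]
  ring_nf

lemma integrable_abs_rpow_mul_exp_neg_mul_abs_rpow {p q b : ℝ} (hq : -1 < q) (hp : 0 < p)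
    (hb : 0 < b) : Integrable fun x : ℝ ↦ |x| ^ q * Real.exp (-b * |x| ^ p) := by
  refine (integrable_fun_norm_addHaar volume
    (f := fun x : ℝ ↦ x ^ q * Real.exp (-b * x ^ p))).2 ?_
  simpa using integrableOn_rpow_mul_exp_neg_mul_rpow hq hp hb

lemma integral_abs_rpow_mul_exp_neg_mul_abs_rpow {p q b : ℝ} (hq : -1 < q) (hp : 0 < p)
    (hb : 0 < b) : ∫ x : ℝ, |x| ^ q * Real.exp (-b * |x| ^ p) =
      2 * (b ^ (-(q + 1) / p) * (1 / p) * Real.Gamma ((q + 1) / p)) := by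
  rw [← integral_rpow_mul_exp_neg_mul_rpow hp hq hb]
  exact integral_comp_abs (f := fun x : ℝ ↦ x ^ q * Real.exp (-b * x ^ p))

lemma integrable_uncurry_of_norm_le {α β E : Type*} [MeasurableSpace α] [MeasurableSpace β]
    [NormedAddCommGroup E] {μ : Measure α} {ν : Measure β} [SFinite μ] [SFinite ν]
    {F : α → β → E} {G : α → β → ℝ} {H : α → ℝ}
    (hF : AEStronglyMeasurable (Function.uncurry F) (μ.prod ν))
    (hFG : ∀ᵐ x ∂μ, ∀ᵐ y ∂ν, ‖F x y‖ ≤ G x y) (hG : ∀ᵐ x ∂μ, Integrable (G x) ν)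
    (hGH : ∀ᵐ x ∂μ, ∫ y, G x y ∂ν ≤ H x) (hH : Integrable H μ) :
    Integrable (Function.uncurry F) (μ.prod ν) := by
  have hslice : ∀ᵐ x ∂μ, Integrable (F x) ν := by
    filter_upwards [hF.prodMk_left, hFG, hG] with x hFx hFGx hGx
    exact hGx.mono' hFx hFGx
  refine (integrable_prod_iff hF).2 ⟨hslice, hH.mono' hF.norm.integral_prod_right' ?_⟩
  filter_upwards [hslice, hFG, hG, hGH] with x hFx hFGx hGx hGHx
  rw [Real.norm_of_nonneg (integral_nonneg fun y ↦ norm_nonneg _)]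
  exact (integral_mono_ae hFx.norm hGx hFGx).trans hGHx

/-! ### The Fourier transform of the quartic exponential -/

/-- Interpolation between `‖𝓕 f‖ ≤ ‖f‖₁` and `‖2πa 𝓕 f(a)‖ ≤ ‖f'‖₁`. -/
lemma norm_fourier_mul_rpow_le {E : Type*} [NormedAddCommGroup E] [NormedSpace ℂ E] {f : ℝ → E}
    (hf : Integrable f) (hdiff : Differentiable ℝ f) (hderiv : Integrable (deriv f)) {θ : ℝ}
    (hθ₀ : 0 ≤ θ) (hθ₁ : θ ≤ 1) (a : ℝ) :
    ‖𝓕 f a‖ * (2 * π * |a|) ^ θ ≤ (∫ x, ‖f x‖) ^ (1 - θ) * (∫ x, ‖deriv f x‖) ^ θ := by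
  have hzeroth : ‖𝓕 f a‖ ≤ ∫ x, ‖f x‖ :=
    VectorFourier.norm_fourierIntegral_le_integral_norm _ _ _ _ _
  have hfirst : ‖𝓕 f a‖ * (2 * π * |a|) ≤ ∫ x, ‖deriv f x‖ := by
    calc ‖𝓕 f a‖ * (2 * π * |a|) = ‖𝓕 (deriv f) a‖ := by
          rw [Real.fourier_deriv hf hdiff hderiv, norm_smul]
          simp [abs_of_pos Real.pi_pos, mul_comm]
      _ ≤ _ := VectorFourier.norm_fourierIntegral_le_integral_norm _ _ _ _ _
  calc ‖𝓕 f a‖ * (2 * π * |a|) ^ θ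
      = ‖𝓕 f a‖ ^ (1 - θ) * (‖𝓕 f a‖ * (2 * π * |a|)) ^ θ := by
        rw [Real.mul_rpow (norm_nonneg _) (by positivity), ← mul_assoc,
          ← Real.rpow_add' (norm_nonneg _) (by simp), sub_add_cancel, Real.rpow_one]
    _ ≤ _ := by
        have : 0 ≤ 1 - θ := sub_nonneg.2 hθ₁
        gcongr

/-- The profile `x ↦ e^{-πrx⁴}`, through which the Korányi kernel depends on its first variable
after subordination. It is complex-valued so that its Fourier transform can be taken. -/
noncomputable def quarticGaussian (r x : ℝ) : ℂ := (Real.exp (-(π * r * x ^ 4)) : ℝ)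

section QuarticGaussian

variable {r : ℝ}

lemma norm_quarticGaussian (r x : ℝ) : ‖quarticGaussian r x‖ = Real.exp (-(π * r * x ^ 4)) := by
  rw [quarticGaussian, Complex.norm_real, Real.norm_of_nonneg (Real.exp_pos _).le]

lemma continuous_uncurry_quarticGaussian : Continuous (Function.uncurry quarticGaussian) := by
  unfold Function.uncurry quarticGaussian
  fun_prop

lemma exp_neg_mul_abs_rpow_four (r x : ℝ) :
    Real.exp (-(π * r) * |x| ^ (4 : ℝ)) = Real.exp (-(π * r * x ^ 4)) := by
  norm_cast
  rw [Even.pow_abs (by decide), neg_mul]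

lemma integrable_quarticGaussian (hr : 0 < r) : Integrable (quarticGaussian r) := by
  have hreal := integrable_abs_rpow_mul_exp_neg_mul_abs_rpow (p := 4) (q := 0) (b := π * r)
    (by norm_num) (by norm_num) (by positivity)
  simp only [Real.rpow_zero, one_mul, exp_neg_mul_abs_rpow_four] at hreal
  exact hreal.ofReal

lemma integral_norm_quarticGaussian (hr : 0 < r) :
    ∫ x, ‖quarticGaussian r x‖ = r ^ (-(1 / 4) : ℝ) * ∫ x, ‖quarticGaussian 1 x‖ := by
  have hreal {ρ : ℝ} (hρ : 0 < ρ) := integral_abs_rpow_mul_exp_neg_mul_abs_rpow (p := 4) (q := 0)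
    (b := π * ρ) (by norm_num) (by norm_num) (by positivity)
  simp only [Real.rpow_zero, one_mul, exp_neg_mul_abs_rpow_four] at hreal
  simp only [norm_quarticGaussian, hreal hr, hreal one_pos]
  rw [Real.mul_rpow Real.pi_pos.le hr.le, mul_one]
  ring_nf

lemma hasDerivAt_quarticGaussian (r x : ℝ) :
    HasDerivAt (quarticGaussian r) ((-(π * r * (4 * x ^ 3)) : ℝ) * quarticGaussian r x) x := by
  have hexp := ((((hasDerivAt_pow 4 x).const_mul (π * r)).neg).exp).ofReal_comp
  refine hexp.congr_deriv ?_
  simp only [quarticGaussian, Pi.neg_apply]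
  push_cast
  ring

lemma norm_deriv_quarticGaussian (hr : 0 < r) (x : ℝ) : ‖deriv (quarticGaussian r) x‖ =
    4 * (π * r) * (|x| ^ (3 : ℝ) * Real.exp (-(π * r) * |x| ^ (4 : ℝ))) := by
  rw [(hasDerivAt_quarticGaussian r x).deriv, norm_mul, norm_quarticGaussian,
    exp_neg_mul_abs_rpow_four, Complex.norm_real, norm_neg, norm_mul,
    Real.norm_of_nonneg (by positivity : 0 ≤ π * r), norm_mul, norm_pow, Real.norm_eq_abs x]
  norm_num
  ring

lemma integrable_deriv_quarticGaussian (hr : 0 < r) : Integrable (deriv (quarticGaussian r)) := by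
  refine (integrable_norm_iff (aestronglyMeasurable_deriv _ _)).1 ?_
  simp only [norm_deriv_quarticGaussian hr]
  exact (integrable_abs_rpow_mul_exp_neg_mul_abs_rpow (by norm_num) (by norm_num)
    (by positivity)).const_mul _

lemma integral_norm_deriv_quarticGaussian (hr : 0 < r) :
    ∫ x, ‖deriv (quarticGaussian r) x‖ = 2 := by
  simp only [norm_deriv_quarticGaussian hr]
  rw [integral_const_mul, integral_abs_rpow_mul_exp_neg_mul_abs_rpow (by norm_num) (by norm_num)
    (by positivity), show (3 + 1 : ℝ) / 4 = 1 by norm_num, show -(3 + 1 : ℝ) / 4 = -1 by norm_num,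
    Real.Gamma_one, Real.rpow_neg_one]
  field_simp

lemma exists_norm_fourier_quarticGaussian_le {θ : ℝ} (hθ₀ : 0 ≤ θ) (hθ₁ : θ ≤ 1) :
    ∃ C, ∀ r > 0, ∀ a ≠ 0,
      ‖𝓕 (quarticGaussian r) a‖ ≤ C * (r ^ ((θ - 1) / 4) * |a| ^ (-θ)) := by
  refine ⟨(∫ x, ‖quarticGaussian 1 x‖) ^ (1 - θ) * 2 ^ θ / (2 * π) ^ θ, fun r hr a ha ↦ ?_⟩
  have ha' : 0 < |a| := abs_pos.2 ha
  have hinterp := norm_fourier_mul_rpow_le (integrable_quarticGaussian hr)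
    (fun x ↦ (hasDerivAt_quarticGaussian r x).differentiableAt)
    (integrable_deriv_quarticGaussian hr) hθ₀ hθ₁ a
  rw [integral_norm_deriv_quarticGaussian hr, integral_norm_quarticGaussian hr,
    Real.mul_rpow (by positivity) (integral_nonneg fun x ↦ norm_nonneg _), ← Real.rpow_mul hr.le,
    Real.mul_rpow (by positivity) ha'.le, ← mul_assoc, ← le_div_iff₀ (by positivity)] at hinterp
  refine ((le_div_iff₀ (by positivity)).2 hinterp).trans_eq ?_
  rw [Real.rpow_neg ha'.le]
  ring_nf

end QuarticGaussian

/-! ### Subordination of the Korányi kernel -/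

/-- The function `e^{-πr(x⁴ + t²)}` on the plane, of which the Korányi kernels are superpositions
over `r > 0` with power weights. -/
noncomputable def koranyiGaussian (r : ℝ) (p : ℝ × ℝ) : ℝ :=
  Real.exp (-(π * r * (p.1 ^ 4 + p.2 ^ 2)))

lemma koranyiGaussian_eq_mul (r : ℝ) (p : ℝ × ℝ) : (koranyiGaussian r p : ℂ) =
    quarticGaussian r p.1 * (Real.exp (-(π * r * p.2 ^ 2)) : ℝ) := by
  rw [koranyiGaussian, quarticGaussian, ← Complex.ofReal_mul, ← Real.exp_add]
  ring_nf

lemma continuous_uncurry_koranyiGaussian : Continuous (Function.uncurry koranyiGaussian) := by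
  unfold Function.uncurry koranyiGaussian
  fun_prop

lemma integrable_koranyiGaussian {r : ℝ} (hr : 0 < r) :
    Integrable fun p ↦ (koranyiGaussian r p : ℂ) := by
  have hgaussian : Integrable fun t : ℝ ↦ ((Real.exp (-(π * r * t ^ 2)) : ℝ) : ℂ) := by
    simpa only [neg_mul] using!
      (integrable_exp_neg_mul_sq (b := π * r) (by positivity)).ofReal (𝕜 := ℂ)
  simpa only [koranyiGaussian_eq_mul] using! (integrable_quarticGaussian hr).mul_prod hgaussian

lemma fourier_exp_neg_mul_sq {r : ℝ} (hr : 0 < r) (b : ℝ) :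
    𝓕 (fun t : ℝ ↦ ((Real.exp (-(π * r * t ^ 2)) : ℝ) : ℂ)) b =
      (r ^ (-(1 / 2) : ℝ) * Real.exp (-(π * b ^ 2 / r)) : ℝ) := by
  have hpi := congrFun (fourier_gaussian_pi (b := (r : ℂ)) (by simpa using hr)) b
  have hsqrt : 1 / (r : ℂ) ^ (1 / 2 : ℂ) = (r ^ (-(1 / 2) : ℝ) : ℝ) := by
    rw [Real.rpow_neg hr.le, one_div, Complex.ofReal_inv, Complex.ofReal_cpow hr.le]
    push_cast
    rfl
  rw [hsqrt] at hpi
  push_cast at hpi ⊢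
  ring_nf at hpi ⊢
  exact hpi

lemma fourier2_koranyiGaussian {r : ℝ} (hr : 0 < r) (ξ : ℝ × ℝ) :
    fourier2 (fun p ↦ koranyiGaussian r p) ξ =
      𝓕 (quarticGaussian r) ξ.1 * (r ^ (-(1 / 2) : ℝ) * Real.exp (-(π * ξ.2 ^ 2 / r)) : ℝ) := by
  simp only [koranyiGaussian_eq_mul]
  rw [fourier2_mul _ fun t ↦ ((Real.exp (-(π * r * t ^ 2)) : ℝ) : ℂ), fourier_exp_neg_mul_sq hr]

lemma stronglyMeasurable_fourier2_koranyiGaussian : StronglyMeasurable fun z : (ℝ × ℝ) × ℝ ↦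
    fourier2 (fun p ↦ koranyiGaussian z.2 p) z.1 := by
  unfold fourier2 koranyiGaussian
  refine StronglyMeasurable.integral_prod_right' (f := fun w : ((ℝ × ℝ) × ℝ) × (ℝ × ℝ) ↦
    Complex.exp (-2 * (π : ℂ) * Complex.I * ((w.2.1 : ℂ) * w.1.1.1 + (w.2.2 : ℂ) * w.1.1.2)) *
      ((Real.exp (-(π * w.1.2 * (w.2.1 ^ 4 + w.2.2 ^ 2))) : ℝ) : ℂ)) ?_
  exact Continuous.stronglyMeasurable (by fun_prop)

section Subordination

variable {s : ℝ} {p : ℝ × ℝ}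

lemma pow_four_add_sq_pos (hp : p ≠ 0) : 0 < p.1 ^ 4 + p.2 ^ 2 := by
  rcases not_and_or.1 (mt Prod.ext_iff.2 hp) with hfst | hsnd
  · have : p.1 ≠ 0 := hfst
    positivity
  · have : p.2 ≠ 0 := hsnd
    positivity

lemma integrableOn_rpow_mul_koranyiGaussian (hs : 0 < s) (hp : p ≠ 0) :
    IntegrableOn (fun r ↦ r ^ (s / 4 - 1) * koranyiGaussian r p) (Ioi 0) := by
  have hA := pow_four_add_sq_pos hp
  have hgamma := integrableOn_rpow_mul_exp_neg_mul_rpow (s := s / 4 - 1) (p := 1)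
    (b := π * (p.1 ^ 4 + p.2 ^ 2)) (by linarith) one_pos (by positivity)
  refine hgamma.congr_fun (fun r _ ↦ ?_) measurableSet_Ioi
  simp only [koranyiGaussian, Real.rpow_one]
  ring_nf

lemma integral_rpow_mul_koranyiGaussian (hs : 0 < s) (hp : p ≠ 0) :
    ∫ r in Ioi 0, r ^ (s / 4 - 1) * koranyiGaussian r p =
      Real.Gamma (s / 4) / π ^ (s / 4) * koranyiKernel s p := by
  have hA := pow_four_add_sq_pos hp
  have hgamma := Real.integral_rpow_mul_exp_neg_mul_Ioi (a := s / 4)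
    (r := π * (p.1 ^ 4 + p.2 ^ 2)) (by positivity) (by positivity)
  simp only [koranyiGaussian, koranyiKernel, mul_right_comm π _ (p.1 ^ 4 + p.2 ^ 2)]
  rw [hgamma, one_div, Real.inv_rpow (by positivity), Real.mul_rpow Real.pi_pos.le hA.le,
    Real.rpow_neg hA.le]
  field_simp

/-- Weighted AM–GM, `x⁴ + t² ≥ |x|^{4/3} |t|^{4/3}`, with equal exponents so that both factors of
the bound are locally integrable in the whole range `s < 3`. -/
lemma koranyiKernel_le (hs : 0 ≤ s) (hx : p.1 ≠ 0) (ht : p.2 ≠ 0) :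
    koranyiKernel s p ≤ |p.1| ^ (-(s / 3)) * |p.2| ^ (-(s / 3)) := by
  have hx' : 0 < |p.1| := abs_pos.2 hx
  have ht' : 0 < |p.2| := abs_pos.2 ht
  have hamgm : |p.1| ^ (4 / 3 : ℝ) * |p.2| ^ (4 / 3 : ℝ) ≤ p.1 ^ 4 + p.2 ^ 2 := by
    have hmean := Real.geom_mean_le_arith_mean2_weighted (w₁ := 1 / 3) (w₂ := 2 / 3)
      (by norm_num) (by norm_num) (pow_nonneg hx'.le 4) (pow_nonneg ht'.le 2) (by norm_num)
    rw [← Real.rpow_natCast_mul hx'.le, ← Real.rpow_natCast_mul ht'.le, sq_abs,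
      Even.pow_abs (by decide)] at hmean
    norm_num at hmean
    linarith [pow_nonneg (sq_nonneg p.1) 2, sq_nonneg p.2]
  calc koranyiKernel s p ≤ (|p.1| ^ (4 / 3 : ℝ) * |p.2| ^ (4 / 3 : ℝ)) ^ (-(s / 4)) :=
        Real.rpow_le_rpow_of_nonpos (by positivity) hamgm (by linarith)
    _ = _ := by
        rw [Real.mul_rpow (by positivity) (by positivity), ← Real.rpow_mul hx'.le,
          ← Real.rpow_mul ht'.le]
        ring_nf

end Subordination

/-! ### The inner integral as a Bessel function -/

lemma mellin_exp_neg_mul_add_inv (ν : ℂ) {y c : ℝ} (hy : 0 < y) (hc : 0 < c) :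
    mellin (fun r : ℝ ↦ ((Real.exp (-(y * (c * r + (c * r)⁻¹))) : ℝ) : ℂ)) ν =
      2 * (c : ℂ) ^ (-ν) * besselK ν (2 * y : ℝ) := by
  have hweight (r : ℝ) : ((Real.exp (-(y * (c * r + (c * r)⁻¹))) : ℝ) : ℂ) =
      macdonaldWeight (y ^ 2) (y * c * r) := by
    rw [macdonaldWeight, sq, mul_assoc y c r, mul_div_mul_left _ _ hy.ne', div_eq_mul_inv]
    ring_nf
  simp only [hweight]
  rw [mellin_comp_mul_left _ _ (by positivity), besselK_two_mul ν hy, macdonaldIntegral,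
    Complex.ofReal_mul, Complex.mul_cpow_ofReal_nonneg hy.le hc.le, smul_eq_mul]
  ring

lemma integral_rpow_mul_exp_mul_quarticGaussian (s : ℝ) {b x : ℝ} (hb : b ≠ 0) (hx : x ≠ 0) :
    ∫ r in Ioi 0, ((r ^ (s / 4 - 3 / 2) * Real.exp (-(π * b ^ 2 / r)) : ℝ) : ℂ) *
        quarticGaussian r x =
      ((2 * |b| ^ ((s - 2) / 4) : ℝ) : ℂ) * (((|x| ^ (1 - s / 2) : ℝ) : ℂ) *
        besselK (((s - 2) / 4 : ℝ) : ℂ) ((2 * π * |b| * x ^ 2 : ℝ) : ℂ)) := by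
  have hb' : 0 < |b| := abs_pos.2 hb
  have hx' : 0 < |x| := abs_pos.2 hx
  have hmellin := mellin_exp_neg_mul_add_inv (((s - 2) / 4 : ℝ) : ℂ)
    (y := π * |b| * x ^ 2) (c := x ^ 2 / |b|) (by positivity) (by positivity)
  have hpower : (x ^ 2 / |b|) ^ (-((s - 2) / 4)) = |b| ^ ((s - 2) / 4) * |x| ^ (1 - s / 2) := by
    rw [Real.div_rpow (sq_nonneg x) hb'.le, Real.rpow_neg hb'.le, div_inv_eq_mul, mul_comm,
      ← sq_abs, ← Real.rpow_natCast_mul hx'.le]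
    ring_nf
  rw [← Complex.ofReal_neg, ← Complex.ofReal_cpow (by positivity), hpower] at hmellin
  calc _ = mellin (fun r : ℝ ↦ ((Real.exp (-(π * |b| * x ^ 2 *
        (x ^ 2 / |b| * r + (x ^ 2 / |b| * r)⁻¹))) : ℝ) : ℂ)) (((s - 2) / 4 : ℝ) : ℂ) := by
        refine setIntegral_congr_fun measurableSet_Ioi fun r (hr : 0 < r) ↦ ?_
        have hexponent : -(π * |b| * x ^ 2 * (x ^ 2 / |b| * r + (x ^ 2 / |b| * r)⁻¹)) =
            -(π * b ^ 2 / r) + -(π * r * x ^ 4) := by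
          rw [← sq_abs b]
          field_simp
          ring
        simp only [hexponent, quarticGaussian, Real.exp_add, smul_eq_mul]
        rw [← Complex.ofReal_one, ← Complex.ofReal_sub, ← Complex.ofReal_cpow hr.le]
        push_cast
        ring_nf
    _ = _ := by
        rw [hmellin, show 2 * (π * |b| * x ^ 2) = 2 * π * |b| * x ^ 2 by ring]
        push_cast
        ring

lemma integrable_exp_mul_rpow_mul_exp_mul_quarticGaussian {s : ℝ} (hs : s < 3) (a : ℝ) {b : ℝ}
    (hb : b ≠ 0) : Integrable (Function.uncurry fun r x : ℝ ↦
      Complex.exp (-2 * (π : ℂ) * Complex.I * (x : ℂ) * (a : ℂ)) *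
        (((r ^ (s / 4 - 3 / 2) * Real.exp (-(π * b ^ 2 / r)) : ℝ) : ℂ) * quarticGaussian r x))
      ((volume.restrict (Ioi 0)).prod volume) := by
  have hphase (x : ℝ) : ‖Complex.exp (-2 * (π : ℂ) * Complex.I * (x : ℂ) * (a : ℂ))‖ = 1 := by
    rw [Complex.norm_exp]
    simp
  refine integrable_uncurry_of_norm_le
    (G := fun r x ↦ r ^ (s / 4 - 3 / 2) * Real.exp (-(π * b ^ 2 / r)) * ‖quarticGaussian r x‖)
    (H := fun r ↦ r ^ (s / 4 - 7 / 4) * Real.exp (-(π * b ^ 2 / r)) *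
      ∫ x, ‖quarticGaussian 1 x‖) ?_ ?_ ?_ ?_ ?_
  · exact Measurable.aestronglyMeasurable <| (by fun_prop : Measurable fun z : ℝ × ℝ ↦
      Complex.exp (-2 * (π : ℂ) * Complex.I * (z.2 : ℂ) * (a : ℂ))).mul <|
      (by fun_prop : Measurable fun z : ℝ × ℝ ↦
        ((z.1 ^ (s / 4 - 3 / 2) * Real.exp (-(π * b ^ 2 / z.1)) : ℝ) : ℂ)).mul
      continuous_uncurry_quarticGaussian.measurable
  · filter_upwards [ae_restrict_mem measurableSet_Ioi] with r (hr : 0 < r)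
    refine Eventually.of_forall fun x ↦ ?_
    rw [norm_mul, hphase, one_mul, norm_mul, Complex.norm_real, Real.norm_of_nonneg (by positivity)]
  · filter_upwards [ae_restrict_mem measurableSet_Ioi] with r (hr : 0 < r)
    exact (integrable_quarticGaussian hr).norm.const_mul _
  · filter_upwards [ae_restrict_mem measurableSet_Ioi] with r (hr : 0 < r)
    rw [integral_const_mul, integral_norm_quarticGaussian hr,
      show s / 4 - 7 / 4 = s / 4 - 3 / 2 + -(1 / 4) by ring, Real.rpow_add hr]
    exact le_of_eq (by ring)
  · exact (integrableOn_rpow_mul_exp_neg_div (by linarith) (by positivity)).mul_const _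

lemma integral_rpow_mul_fourier2_koranyiGaussian {s : ℝ} (hs : s < 3) {ξ : ℝ × ℝ}
    (hξ : ξ.2 ≠ 0) :
    ∫ r in Ioi 0, ((r ^ (s / 4 - 1) : ℝ) : ℂ) * fourier2 (fun p ↦ koranyiGaussian r p) ξ =
      ((2 * |ξ.2| ^ ((s - 2) / 4) : ℝ) : ℂ) *
        ∫ x : ℝ, Complex.exp (-2 * (π : ℂ) * Complex.I * (x : ℂ) * (ξ.1 : ℂ)) *
          ((|x| ^ (1 - s / 2) : ℝ) : ℂ) *
          besselK (((s - 2) / 4 : ℝ) : ℂ) ((2 * π * |ξ.2| * x ^ 2 : ℝ) : ℂ) := by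
  calc _ = ∫ r in Ioi 0, ∫ x : ℝ, Complex.exp (-2 * (π : ℂ) * Complex.I * (x : ℂ) * (ξ.1 : ℂ)) *
          (((r ^ (s / 4 - 3 / 2) * Real.exp (-(π * ξ.2 ^ 2 / r)) : ℝ) : ℂ) *
            quarticGaussian r x) := by
        refine setIntegral_congr_fun measurableSet_Ioi fun r (hr : 0 < r) ↦ ?_
        simp only [fourier2_koranyiGaussian hr, mul_left_comm (Complex.exp _)]
        rw [integral_const_mul, ← fourier_eq_integral_exp_mul,
          show s / 4 - 3 / 2 = s / 4 - 1 + -(1 / 2) by ring, Real.rpow_add hr]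
        push_cast
        ring
    _ = ∫ x : ℝ, ∫ r in Ioi 0, Complex.exp (-2 * (π : ℂ) * Complex.I * (x : ℂ) * (ξ.1 : ℂ)) *
          (((r ^ (s / 4 - 3 / 2) * Real.exp (-(π * ξ.2 ^ 2 / r)) : ℝ) : ℂ) *
            quarticGaussian r x) :=
        integral_integral_swap (integrable_exp_mul_rpow_mul_exp_mul_quarticGaussian hs ξ.1 hξ)
    _ = _ := by
        rw [← integral_const_mul]
        refine integral_congr_ae ?_
        filter_upwards [Measure.ae_ne volume (0 : ℝ)] with x hx
        rw [integral_const_mul, integral_rpow_mul_exp_mul_quarticGaussian s hξ hx]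
        ring

/-! ### Interchanging subordination with integration over the plane -/

lemma ae_fst_ne_zero_and_snd_ne_zero : ∀ᵐ p : ℝ × ℝ, p.1 ≠ 0 ∧ p.2 ≠ 0 :=
  (Measure.quasiMeasurePreserving_fst.ae (Measure.ae_ne volume 0)).and
    (Measure.quasiMeasurePreserving_snd.ae (Measure.ae_ne volume 0))

section Interchange

variable {s : ℝ} (φ : SchwartzMap (ℝ × ℝ) ℂ)

lemma integrable_schwartzMap_mul_koranyiGaussian (hs : s ∈ Ioo 0 3) :
    Integrable (Function.uncurry fun (p : ℝ × ℝ) (r : ℝ) ↦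
      φ p * ((r ^ (s / 4 - 1) * koranyiGaussian r p : ℝ) : ℂ))
      (volume.prod (volume.restrict (Ioi 0))) := by
  obtain ⟨hs₀, hs₃⟩ := hs
  refine integrable_uncurry_of_norm_le
    (G := fun p r ↦ ‖φ p‖ * (r ^ (s / 4 - 1) * koranyiGaussian r p))
    (H := fun p ↦ Real.Gamma (s / 4) / π ^ (s / 4) *
      (‖φ p‖ * (|p.1| ^ (-(s / 3)) * |p.2| ^ (-(s / 3))))) ?_ ?_ ?_ ?_ ?_
  · refine (φ.continuous.measurable.comp measurable_fst).mul
      (Complex.measurable_ofReal.comp (Measurable.mul ?_ ?_)) |>.aestronglyMeasurable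
    · fun_prop
    · exact continuous_uncurry_koranyiGaussian.measurable.comp measurable_swap
  · refine Eventually.of_forall fun p ↦ ?_
    filter_upwards [ae_restrict_mem measurableSet_Ioi] with r (hr : 0 < r)
    have hnonneg : 0 ≤ r ^ (s / 4 - 1) * koranyiGaussian r p := by
      unfold koranyiGaussian
      positivity
    rw [norm_mul, Complex.norm_real, Real.norm_of_nonneg hnonneg]
  · filter_upwards [Measure.ae_ne volume 0] with p hp
    exact (integrableOn_rpow_mul_koranyiGaussian hs₀ hp).const_mul _
  · filter_upwards [Measure.ae_ne volume 0, ae_fst_ne_zero_and_snd_ne_zero] with p hp ⟨hx, ht⟩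
    have : 0 < Real.Gamma (s / 4) := Real.Gamma_pos_of_pos (by positivity)
    rw [integral_const_mul, integral_rpow_mul_koranyiGaussian hs₀ hp, mul_left_comm]
    gcongr
    exact koranyiKernel_le hs₀.le hx ht
  · exact (integrable_norm_schwartzMap_mul_abs_rpow φ (by linarith) (by linarith)).const_mul _

lemma integral_schwartzMap_mul_koranyiKernel (hs : s ∈ Ioo 0 3) :
    ∫ p, φ p * koranyiKernel s p = ((π ^ (s / 4) / Real.Gamma (s / 4) : ℝ) : ℂ) *
      ∫ r in Ioi 0, ((r ^ (s / 4 - 1) : ℝ) : ℂ) * ∫ p, φ p * koranyiGaussian r p := by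
  have hΓ : 0 < Real.Gamma (s / 4) := Real.Gamma_pos_of_pos (by linarith [hs.1])
  calc ∫ p, φ p * koranyiKernel s p
      = ∫ p, ((π ^ (s / 4) / Real.Gamma (s / 4) : ℝ) : ℂ) * ∫ r in Ioi 0,
          φ p * ((r ^ (s / 4 - 1) * koranyiGaussian r p : ℝ) : ℂ) := by
        refine integral_congr_ae ?_
        filter_upwards [Measure.ae_ne volume 0] with p hp
        rw [integral_const_mul, integral_complex_ofReal,
          integral_rpow_mul_koranyiGaussian hs.1 hp, mul_left_comm, ← Complex.ofReal_mul]
        congr 2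
        field_simp
    _ = _ := by
        rw [integral_const_mul,
          integral_integral_swap (integrable_schwartzMap_mul_koranyiGaussian φ hs)]
        simp only [Complex.ofReal_mul, mul_left_comm (φ _), integral_const_mul]

/-- The decay exponent `θ = 1 - s / 3` makes the singularities in both frequency variables equal,
hence integrable for all `s < 3`. -/
lemma exists_norm_rpow_mul_fourier2_koranyiGaussian_le (hs : s ∈ Ioo 0 3) :
    ∃ C, ∀ r > 0, ∀ ξ : ℝ × ℝ, ξ.1 ≠ 0 →
      ‖((r ^ (s / 4 - 1) : ℝ) : ℂ) * fourier2 (fun p ↦ koranyiGaussian r p) ξ‖ ≤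
        C * |ξ.1| ^ (s / 3 - 1) * (r ^ (s / 6 - 3 / 2) * Real.exp (-(π * ξ.2 ^ 2 / r))) := by
  obtain ⟨C, hC⟩ := exists_norm_fourier_quarticGaussian_le (θ := 1 - s / 3)
    (by linarith [hs.2]) (by linarith [hs.1])
  refine ⟨C, fun r hr ξ hξ ↦ ?_⟩
  rw [fourier2_koranyiGaussian hr, norm_mul, norm_mul, Complex.norm_real, Complex.norm_real,
    Real.norm_of_nonneg (by positivity), Real.norm_of_nonneg (by positivity)]
  calc r ^ (s / 4 - 1) * (‖𝓕 (quarticGaussian r) ξ.1‖ *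
        (r ^ (-(1 / 2) : ℝ) * Real.exp (-(π * ξ.2 ^ 2 / r))))
      ≤ r ^ (s / 4 - 1) * (C * (r ^ ((1 - s / 3 - 1) / 4) * |ξ.1| ^ (-(1 - s / 3))) *
        (r ^ (-(1 / 2) : ℝ) * Real.exp (-(π * ξ.2 ^ 2 / r)))) := by
        gcongr
        exact hC r hr ξ.1 hξ
    _ = _ := by
        rw [show s / 6 - 3 / 2 = s / 4 - 1 + (1 - s / 3 - 1) / 4 + -(1 / 2) by ring,
          Real.rpow_add hr, Real.rpow_add hr, neg_sub]
        ring

lemma integrable_schwartzMap_mul_fourier2_koranyiGaussian (hs : s ∈ Ioo 0 3) :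
    Integrable (Function.uncurry fun (ξ : ℝ × ℝ) (r : ℝ) ↦
      φ ξ * (((r ^ (s / 4 - 1) : ℝ) : ℂ) * fourier2 (fun p ↦ koranyiGaussian r p) ξ))
      (volume.prod (volume.restrict (Ioi 0))) := by
  obtain ⟨C, hC⟩ := exists_norm_rpow_mul_fourier2_koranyiGaussian_le hs
  obtain ⟨hs₀, hs₃⟩ := hs
  refine integrable_uncurry_of_norm_le
    (G := fun ξ r ↦ ‖φ ξ‖ * (C * |ξ.1| ^ (s / 3 - 1)) *
      (r ^ (s / 6 - 3 / 2) * Real.exp (-(π * ξ.2 ^ 2 / r))))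
    (H := fun ξ ↦ C * (π ^ (s / 6 - 1 / 2) * Real.Gamma (1 / 2 - s / 6)) *
      (‖φ ξ‖ * (|ξ.1| ^ (s / 3 - 1) * |ξ.2| ^ (s / 3 - 1)))) ?_ ?_ ?_ ?_ ?_
  · exact (φ.continuous.measurable.comp measurable_fst).aestronglyMeasurable.mul <|
      (by fun_prop : Measurable fun z : (ℝ × ℝ) × ℝ ↦
        ((z.2 ^ (s / 4 - 1) : ℝ) : ℂ)).aestronglyMeasurable.mul
      stronglyMeasurable_fourier2_koranyiGaussian.aestronglyMeasurable
  · filter_upwards [ae_fst_ne_zero_and_snd_ne_zero] with ξ ⟨hξ, _⟩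
    filter_upwards [ae_restrict_mem measurableSet_Ioi] with r (hr : 0 < r)
    rw [norm_mul, mul_assoc]
    exact mul_le_mul_of_nonneg_left (hC r hr ξ hξ) (norm_nonneg _)
  · filter_upwards [ae_fst_ne_zero_and_snd_ne_zero] with ξ ⟨_, hξ⟩
    exact (integrableOn_rpow_mul_exp_neg_div (by linarith) (by positivity)).const_mul _
  · filter_upwards [ae_fst_ne_zero_and_snd_ne_zero] with ξ ⟨_, hξ⟩
    rw [integral_const_mul, integral_rpow_mul_exp_neg_div (by linarith) (by positivity),
      Real.mul_rpow Real.pi_pos.le (sq_nonneg _), ← sq_abs,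
      ← Real.rpow_natCast_mul (abs_nonneg _)]
    exact le_of_eq (by ring_nf)
  · exact (integrable_norm_schwartzMap_mul_abs_rpow φ (by linarith) (by linarith)).const_mul _

lemma integral_rpow_mul_integral_schwartzMap_mul_fourier2 (hs : s ∈ Ioo 0 3) :
    ∫ r in Ioi 0, ((r ^ (s / 4 - 1) : ℝ) : ℂ) *
        ∫ ξ, φ ξ * fourier2 (fun p ↦ koranyiGaussian r p) ξ =
      ∫ ξ, φ ξ * ∫ r in Ioi 0,
        ((r ^ (s / 4 - 1) : ℝ) : ℂ) * fourier2 (fun p ↦ koranyiGaussian r p) ξ := by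
  have hswap := integral_integral_swap (integrable_schwartzMap_mul_fourier2_koranyiGaussian φ hs)
  simp only [← integral_const_mul, mul_left_comm _ (φ _)] at hswap ⊢
  exact hswap.symm

end Interchange

theorem koranyiKernel_fourier_formula_general (s : ℝ) (hs : s ∈ Set.Ioo (0 : ℝ) 3)
    (φ : SchwartzMap (ℝ × ℝ) ℂ) :
    (∫ p : ℝ × ℝ, fourier2 (fun q => φ q) p * (koranyiKernel s p : ℂ)) =
    ∫ ξ : ℝ × ℝ, φ ξ *
      (((2 * Real.pi ^ (s / 4) * |ξ.2| ^ ((s - 2) / 4) / Real.Gamma (s / 4) : ℝ) : ℂ) *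
        ∫ x : ℝ,
          Complex.exp (-2 * (Real.pi : ℂ) * Complex.I * (x : ℂ) * (ξ.1 : ℂ)) *
            ((|x| ^ (1 - s / 2) : ℝ) : ℂ) *
            besselK (((s - 2) / 4 : ℝ) : ℂ) ((2 * Real.pi * |ξ.2| * x ^ 2 : ℝ) : ℂ)) := by
  obtain ⟨ψ, hψ⟩ := exists_schwartzMap_eq_fourier2 φ
  calc ∫ p, fourier2 φ p * koranyiKernel s p
      = ((π ^ (s / 4) / Real.Gamma (s / 4) : ℝ) : ℂ) * ∫ r in Ioi 0,
          ((r ^ (s / 4 - 1) : ℝ) : ℂ) * ∫ p, fourier2 φ p * koranyiGaussian r p := by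
        rw [← hψ, integral_schwartzMap_mul_koranyiKernel ψ hs]
    _ = ((π ^ (s / 4) / Real.Gamma (s / 4) : ℝ) : ℂ) * ∫ r in Ioi 0,
          ((r ^ (s / 4 - 1) : ℝ) : ℂ) * ∫ ξ, φ ξ * fourier2 (fun p ↦ koranyiGaussian r p) ξ := by
        congr 1
        refine setIntegral_congr_fun measurableSet_Ioi fun r (hr : 0 < r) ↦ ?_
        simp only [integral_fourier2_mul φ.integrable (integrable_koranyiGaussian hr)]
    _ = ∫ ξ, φ ξ * (((π ^ (s / 4) / Real.Gamma (s / 4) : ℝ) : ℂ) * ∫ r in Ioi 0,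
          ((r ^ (s / 4 - 1) : ℝ) : ℂ) * fourier2 (fun p ↦ koranyiGaussian r p) ξ) := by
        rw [integral_rpow_mul_integral_schwartzMap_mul_fourier2 φ hs, ← integral_const_mul]
        simp only [mul_left_comm (φ _)]
    _ = _ := by
        refine integral_congr_ae ?_
        filter_upwards [ae_fst_ne_zero_and_snd_ne_zero] with ξ ⟨_, hξ⟩
        rw [integral_rpow_mul_fourier2_koranyiGaussian hs.2 hξ]
        push_cast
        ring

/-- **Lemma 3.2, formula (3.2).** For `s ∈ (1,3)`, the distributional Fourier transform of
`f_s` is represented by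
`ξ ↦ (2π^{s/4} |ξ₂|^{(s-2)/4} / Γ(s/4)) ∫_ℝ e^{-2πixξ₁} |x|^{1-s/2} K_{(s-2)/4}(2π|ξ₂|x²) dx`:
for every Schwartz `φ` on `ℝ²`, `∫ φ̂ f_s` equals the integral of `φ` against this function. -/
theorem koranyiKernel_fourier_formula (s : ℝ) (hs : s ∈ Set.Ioo (1 : ℝ) 3)
    (φ : SchwartzMap (ℝ × ℝ) ℂ) :
    (∫ p : ℝ × ℝ, fourier2 (fun q => φ q) p * (koranyiKernel s p : ℂ)) =
    ∫ ξ : ℝ × ℝ, φ ξ *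
      (((2 * Real.pi ^ (s / 4) * |ξ.2| ^ ((s - 2) / 4) / Real.Gamma (s / 4) : ℝ) : ℂ) *
        ∫ x : ℝ,
          Complex.exp (-2 * (Real.pi : ℂ) * Complex.I * (x : ℂ) * (ξ.1 : ℂ)) *
            ((|x| ^ (1 - s / 2) : ℝ) : ℂ) *
            besselK (((s - 2) / 4 : ℝ) : ℂ) ((2 * Real.pi * |ξ.2| * x ^ 2 : ℝ) : ℂ)) :=
  koranyiKernel_fourier_formula_general s ⟨one_pos.trans hs.1, hs.2⟩ φ
end

section
/- For each s ∈ (1,3) there is a constant C_s > 0 such that for every nonzero ξ₂ ∈ ℝ, every x ∈ ℝ, and every N > 0, the tail of the improper Riemann integral satisfies |∫_{−∞}^∞ e^{−2πitξ₂}(x⁴+t²)^{−s/4} dt − ∫_{−N}^N e^{−2πitξ₂}(x⁴+t²)^{−s/4} dt| ≤ C_s / (|ξ₂| (|x|^s + N^{s/2})). -/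
open Filter Set MeasureTheory
open scoped Real

/-!
The weight `(x⁴ + t²)^(-s/4)` is even in `t`, decreasing on `(0, ∞)`, and tends to `0`. Integrating
by parts against a bounded primitive of the character bounds the integral over `[N, M]` by a
multiple of the weight at `N` alone, because the variation of a decreasing function telescopes. The
reflection `t ↦ -t` handles `[-M, -N]`, so the symmetric integrals are Cauchy as `M → ∞` with the
same tail bound, and `(x⁴ + N²)^(s/4)` dominates both `|x|^s` and `N^(s/2)`.
-/

open scoped FourierTransform Topology

section DirichletTest

variable {E : Type*} [NormedAddCommGroup E]

theorem exists_tendsto_forall_norm_sub_le [CompleteSpace E] {F : ℝ → E} {φ : ℝ → ℝ} {a : ℝ}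
    (hφ : Tendsto φ atTop (𝓝 0)) (hF : ∀ N M, a < N → N ≤ M → ‖F M - F N‖ ≤ φ N) :
    ∃ L, Tendsto F atTop (𝓝 L) ∧ ∀ N, a < N → ‖L - F N‖ ≤ φ N := by
  have hcauchy : CauchySeq F := Metric.cauchySeq_iff'.2 fun ε hε ↦ by
    obtain ⟨N, hNε, hN⟩ := ((hφ.eventually_lt_const hε).and (eventually_gt_atTop a)).exists
    exact ⟨N, fun M hM ↦ (dist_eq_norm (F M) (F N)).trans_lt ((hF N M hN hM).trans_lt hNε)⟩
  obtain ⟨L, hL⟩ := cauchySeq_tendsto_of_complete hcauchy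
  refine ⟨L, hL, fun N hN ↦ le_of_tendsto (hL.sub_const (F N)).norm ?_⟩
  filter_upwards [eventually_ge_atTop N] with M hM using hF N M hN hM

variable [NormedSpace ℝ E]

theorem norm_integral_sub_integral_le {f : ℝ → E} {a b c d : ℝ} {μ : Measure ℝ}
    (hac : IntervalIntegrable f μ a c) (hbd : IntervalIntegrable f μ b d) :
    ‖(∫ t in a..b, f t ∂μ) - ∫ t in c..d, f t ∂μ‖
      ≤ ‖∫ t in a..c, f t ∂μ‖ + ‖∫ t in b..d, f t ∂μ‖ := by
  by_cases hcd : IntervalIntegrable f μ c d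
  · have hab : IntervalIntegrable f μ a b := (hac.trans hcd).trans hbd.symm
    rw [intervalIntegral.integral_interval_sub_interval_comm hab hcd hac]
    exact norm_sub_le _ _
  · -- Both integrals on the left then have the junk value `0`.
    have hab : ¬ IntervalIntegrable f μ a b := fun hab ↦ hcd ((hac.symm.trans hab).trans hbd)
    rw [intervalIntegral.integral_undef hab, intervalIntegral.integral_undef hcd, sub_zero,
      norm_zero]
    positivity

variable {u : ℝ → ℝ} {v v' : ℝ → E} {a b B : ℝ}

theorem intervalIntegrable_deriv_of_antitoneOn (hanti : AntitoneOn u (uIcc a b)) :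
    IntervalIntegrable (deriv u) volume a b := by
  simpa only [Pi.neg_def, deriv.fun_neg, neg_neg] using hanti.neg.intervalIntegrable_deriv.neg

theorem deriv_nonpos_of_antitoneOn {s : Set ℝ} {t : ℝ} (hanti : AntitoneOn u s) (ht : s ∈ 𝓝 t) :
    deriv u t ≤ 0 := by
  rw [← derivWithin_of_mem_nhds ht]
  exact hanti.derivWithin_nonpos

theorem norm_integral_deriv_smul_le_of_antitoneOn (hab : a ≤ b) (hu : ContinuousOn u (Icc a b))
    (hu' : DifferentiableOn ℝ u (Ioo a b)) (hanti : AntitoneOn u (Icc a b))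
    (hB : ∀ t ∈ Ioo a b, ‖v t‖ ≤ B) :
    ‖∫ t in a..b, deriv u t • v t‖ ≤ B * (u a - u b) := by
  have hderiv : ∀ t ∈ Ioo a b, HasDerivAt u (deriv u t) t := fun t ht ↦
    (hu'.differentiableAt (Ioo_mem_nhds ht.1 ht.2)).hasDerivAt
  have hint : IntervalIntegrable (deriv u) volume a b :=
    intervalIntegrable_deriv_of_antitoneOn (by rwa [uIcc_of_le hab])
  have hbound : ∀ t ∈ Ioo a b, ‖deriv u t • v t‖ ≤ B * -deriv u t := fun t ht ↦ by
    have hneg : deriv u t ≤ 0 := deriv_nonpos_of_antitoneOn hanti (Icc_mem_nhds ht.1 ht.2)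
    rw [norm_smul, Real.norm_of_nonpos hneg, mul_comm]
    exact mul_le_mul_of_nonneg_right (hB t ht) (neg_nonneg.2 hneg)
  calc ‖∫ t in a..b, deriv u t • v t‖ ≤ ∫ t in a..b, B * -deriv u t := by
        refine intervalIntegral.norm_integral_le_of_norm_le hab ?_ (hint.neg.const_mul B)
        filter_upwards [Measure.ae_ne volume b] with t htb ht
        exact hbound t ⟨ht.1, ht.2.lt_of_ne htb⟩
    _ = B * (u a - u b) := by
        rw [intervalIntegral.integral_const_mul, intervalIntegral.integral_neg,
          intervalIntegral.integral_eq_sub_of_hasDerivAt_of_le hab hu hderiv hint, neg_sub]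

theorem norm_integral_smul_deriv_le_of_antitoneOn [CompleteSpace E] (hab : a ≤ b)
    (hu : ContinuousOn u (Icc a b)) (hu' : DifferentiableOn ℝ u (Ioo a b))
    (hanti : AntitoneOn u (Icc a b)) (hub : 0 ≤ u b)
    (hv : ContinuousOn v (Icc a b)) (hvv' : ∀ t ∈ Ioo a b, HasDerivAt v (v' t) t)
    (hv' : IntervalIntegrable v' volume a b) (hB : ∀ t ∈ Icc a b, ‖v t‖ ≤ B) :
    ‖∫ t in a..b, u t • v' t‖ ≤ 2 * B * u a := by
  have hparts : ∫ t in a..b, u t • v' t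
      = u b • v b - u a • v a - ∫ t in a..b, deriv u t • v t := by
    refine intervalIntegral.integral_smul_deriv_eq_deriv_smul_of_hasDerivAt
      (by rwa [uIcc_of_le hab]) (by rwa [uIcc_of_le hab]) ?_ ?_
      (intervalIntegrable_deriv_of_antitoneOn (by rwa [uIcc_of_le hab])) hv'
    all_goals rw [min_eq_left hab, max_eq_right hab]
    · exact fun t ht ↦ (hu'.differentiableAt (Ioo_mem_nhds ht.1 ht.2)).hasDerivAt
    · exact hvv'
  have hboundary : ∀ t ∈ Icc a b, ‖u t • v t‖ ≤ B * u t := fun t ht ↦ by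
    have hut : 0 ≤ u t := hub.trans (hanti ht (right_mem_Icc.2 hab) ht.2)
    rw [norm_smul, Real.norm_of_nonneg hut, mul_comm]
    exact mul_le_mul_of_nonneg_right (hB t ht) hut
  calc ‖∫ t in a..b, u t • v' t‖
      ≤ ‖u b • v b‖ + ‖u a • v a‖ + ‖∫ t in a..b, deriv u t • v t‖ := by
        rw [hparts]
        exact (norm_sub_le _ _).trans (add_le_add_left (norm_sub_le _ _) _)
    _ ≤ B * u b + B * u a + B * (u a - u b) := by
        gcongr
        · exact hboundary b (right_mem_Icc.2 hab)
        · exact hboundary a (left_mem_Icc.2 hab)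
        · exact norm_integral_deriv_smul_le_of_antitoneOn hab hu hu' hanti
            fun t ht ↦ hB t (Ioo_subset_Icc_self ht)
    _ = 2 * B * u a := by ring

end DirichletTest

section FourierIntegral

variable {g : ℝ → ℝ} {ξ : ℝ}

theorem hasDerivAt_fourierChar_neg_mul_div (hξ : ξ ≠ 0) (t : ℝ) :
    HasDerivAt (fun t ↦ (𝐞 (-(t * ξ)) : ℂ) / (-(2 * π * Complex.I * ξ)))
      (𝐞 (-(t * ξ)) : ℂ) t := by
  have hinner : HasDerivAt (fun t ↦ -(t * ξ)) (-ξ) t := (hasDerivAt_mul_const ξ).neg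
  have hchar := (Real.hasDerivAt_fourierChar (-(t * ξ))).scomp t hinner
  convert! hchar.div_const (-(2 * π * Complex.I * ξ)) using 1
  have hξ' : (ξ : ℂ) ≠ 0 := mod_cast hξ
  have hπ : (π : ℂ) ≠ 0 := mod_cast Real.pi_ne_zero
  rw [Complex.real_smul]
  push_cast
  field_simp [Complex.I_ne_zero]

theorem continuous_fourierChar_neg_mul (ξ : ℝ) :
    Continuous fun t : ℝ ↦ (𝐞 (-(t * ξ)) : ℂ) :=
  Real.differentiable_fourierChar.continuous.comp (by fun_prop)

theorem norm_integral_smul_fourierChar_le (hξ : ξ ≠ 0) {a b : ℝ} (hab : a ≤ b)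
    (hcont : ContinuousOn g (Icc a b)) (hdiff : DifferentiableOn ℝ g (Ioo a b))
    (hanti : AntitoneOn g (Icc a b)) (hgb : 0 ≤ g b) :
    ‖∫ t in a..b, g t • (𝐞 (-(t * ξ)) : ℂ)‖ ≤ g a / (π * |ξ|) := by
  have hderiv := hasDerivAt_fourierChar_neg_mul_div hξ
  have hnorm (t : ℝ) :
      ‖(𝐞 (-(t * ξ)) : ℂ) / (-(2 * π * Complex.I * ξ))‖ = 1 / (2 * π * |ξ|) := by
    rw [norm_div, Circle.norm_coe]
    simp [abs_of_pos Real.pi_pos]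
  calc ‖∫ t in a..b, g t • (𝐞 (-(t * ξ)) : ℂ)‖ ≤ 2 * (1 / (2 * π * |ξ|)) * g a :=
        norm_integral_smul_deriv_le_of_antitoneOn hab hcont hdiff hanti hgb
          (fun t _ ↦ (hderiv t).continuousAt.continuousWithinAt) (fun t _ ↦ hderiv t)
          ((continuous_fourierChar_neg_mul ξ).intervalIntegrable a b) fun t _ ↦ (hnorm t).le
    _ = g a / (π * |ξ|) := by field_simp

theorem norm_symm_integral_smul_fourierChar_sub_le (hξ : ξ ≠ 0) (heven : Function.Even g)
    {N M : ℝ} (hNM : N ≤ M) (hcont : ContinuousOn g (Icc N M))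
    (hdiff : DifferentiableOn ℝ g (Ioo N M)) (hanti : AntitoneOn g (Icc N M)) (hgM : 0 ≤ g M) :
    ‖(∫ t in (-M)..M, g t • (𝐞 (-(t * ξ)) : ℂ)) - ∫ t in (-N)..N, g t • (𝐞 (-(t * ξ)) : ℂ)‖
      ≤ 2 * g N / (π * |ξ|) := by
  have hint (η : ℝ) :
      IntervalIntegrable (fun t ↦ g t • (𝐞 (-(t * η)) : ℂ)) volume N M :=
    (hcont.smul (continuous_fourierChar_neg_mul η).continuousOn).intervalIntegrable_of_Icc hNM
  have hreflect (t : ℝ) :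
      g (-t) • (𝐞 (-(-t * ξ)) : ℂ) = g t • (𝐞 (-(t * -ξ)) : ℂ) := by
    rw [heven t, neg_mul_comm]
  have hint_neg : IntervalIntegrable (fun t ↦ g t • (𝐞 (-(t * ξ)) : ℂ)) volume (-M) (-N) := by
    rw [IntervalIntegrable.iff_comp_neg, neg_neg, neg_neg]
    simp only [hreflect]
    exact (hint (-ξ)).symm
  have hintegral_neg : ∫ t in (-M)..(-N), g t • (𝐞 (-(t * ξ)) : ℂ)
      = ∫ t in N..M, g t • (𝐞 (-(t * -ξ)) : ℂ) := by
    rw [← intervalIntegral.integral_comp_neg]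
    simp only [hreflect]
  refine (norm_integral_sub_integral_le hint_neg (hint ξ).symm).trans ?_
  rw [hintegral_neg, intervalIntegral.integral_symm N M, norm_neg]
  calc ‖∫ t in N..M, g t • (𝐞 (-(t * -ξ)) : ℂ)‖ + ‖∫ t in N..M, g t • (𝐞 (-(t * ξ)) : ℂ)‖
      ≤ g N / (π * |-ξ|) + g N / (π * |ξ|) :=
        add_le_add
          (norm_integral_smul_fourierChar_le (neg_ne_zero.2 hξ) hNM hcont hdiff hanti hgM)
          (norm_integral_smul_fourierChar_le hξ hNM hcont hdiff hanti hgM)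
    _ = 2 * g N / (π * |ξ|) := by rw [abs_neg]; ring

theorem exists_tendsto_symm_integral_smul_fourierChar (hξ : ξ ≠ 0) (heven : Function.Even g)
    (hdiff : DifferentiableOn ℝ g (Ioi 0)) (hanti : AntitoneOn g (Ioi 0))
    (hlim : Tendsto g atTop (𝓝 0)) :
    ∃ L : ℂ, Tendsto (fun N ↦ ∫ t in (-N)..N, g t • (𝐞 (-(t * ξ)) : ℂ)) atTop (𝓝 L) ∧
      ∀ N, 0 < N → ‖L - ∫ t in (-N)..N, g t • (𝐞 (-(t * ξ)) : ℂ)‖ ≤ 2 * g N / (π * |ξ|) := by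
  have hnonneg : ∀ t, 0 < t → 0 ≤ g t := fun t ht ↦ le_of_tendsto hlim <| by
    filter_upwards [eventually_ge_atTop t] with r hr using hanti ht (ht.trans_le hr) hr
  refine exists_tendsto_forall_norm_sub_le
    (by simpa using (hlim.const_mul 2).div_const (π * |ξ|)) fun N M hN hNM ↦ ?_
  have hpos : Icc N M ⊆ Ioi 0 := fun t ht ↦ hN.trans_le ht.1
  exact norm_symm_integral_smul_fourierChar_sub_le hξ heven hNM (hdiff.continuousOn.mono hpos)
    (hdiff.mono (Ioo_subset_Icc_self.trans hpos)) (hanti.mono hpos) (hnonneg M (hN.trans_le hNM))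

end FourierIntegral

/-- The Korányi weight `‖(x, t)‖^(-s)`, where `‖(x, t)‖ = (x⁴ + t²)^(1/4)` is the Korányi norm.
Its junk value at the origin is `0` for `s ≠ 0`. -/
noncomputable def koranyiWeight (s x t : ℝ) : ℝ := (x ^ 4 + t ^ 2) ^ (-(s / 4))

section KoranyiWeight

variable {s : ℝ}

theorem even_koranyiWeight (s x : ℝ) : Function.Even (koranyiWeight s x) := fun t ↦ by
  simp only [koranyiWeight, even_two.neg_pow]

theorem differentiableOn_koranyiWeight (s x : ℝ) :
    DifferentiableOn ℝ (koranyiWeight s x) {0}ᶜ :=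
  DifferentiableOn.rpow_const (by fun_prop) fun t (ht : t ≠ 0) ↦ Or.inl (by positivity)

theorem antitoneOn_koranyiWeight (hs : 0 ≤ s) (x : ℝ) :
    AntitoneOn (koranyiWeight s x) (Ioi 0) := fun t (ht : 0 < t) r _ htr ↦
  Real.rpow_le_rpow_of_nonpos (by positivity) (by gcongr) (by linarith)

theorem tendsto_koranyiWeight_atTop (hs : 0 < s) (x : ℝ) :
    Tendsto (koranyiWeight s x) atTop (𝓝 0) := by
  have hbase : Tendsto (fun t : ℝ ↦ x ^ 4 + t ^ 2) atTop atTop :=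
    tendsto_atTop_add_const_left _ _ (tendsto_pow_atTop two_ne_zero)
  exact (tendsto_rpow_neg_atTop (by positivity : 0 < s / 4)).comp hbase

theorem abs_rpow_add_abs_rpow_le (hs : 0 ≤ s) (x t : ℝ) :
    |x| ^ s + |t| ^ (s / 2) ≤ 2 * (x ^ 4 + t ^ 2) ^ (s / 4) := by
  have hx : |x| ^ s = (x ^ 4) ^ (s / 4) := by
    rw [← (show Even 4 by decide).pow_abs x, ← Real.rpow_natCast_mul (abs_nonneg x)]
    congr 1; push_cast; ring
  have ht : |t| ^ (s / 2) = (t ^ 2) ^ (s / 4) := by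
    rw [← sq_abs t, ← Real.rpow_natCast_mul (abs_nonneg t)]
    congr 1; push_cast; ring
  have hx_le : (x ^ 4) ^ (s / 4) ≤ (x ^ 4 + t ^ 2) ^ (s / 4) := by
    gcongr; exact le_add_of_nonneg_right (by positivity)
  have ht_le : (t ^ 2) ^ (s / 4) ≤ (x ^ 4 + t ^ 2) ^ (s / 4) := by
    gcongr; exact le_add_of_nonneg_left (by positivity)
  rw [hx, ht, two_mul]
  exact add_le_add hx_le ht_le

theorem koranyiWeight_le (hs : 0 ≤ s) (x : ℝ) {t : ℝ} (ht : t ≠ 0) :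
    koranyiWeight s x t ≤ 2 / (|x| ^ s + |t| ^ (s / 2)) := by
  have hbase : 0 < x ^ 4 + t ^ 2 := by positivity
  have hsum : 0 < |x| ^ s + |t| ^ (s / 2) := by positivity
  rw [koranyiWeight, Real.rpow_neg hbase.le, ← one_div,
    div_le_div_iff₀ (Real.rpow_pos_of_pos hbase _) hsum, one_mul]
  exact abs_rpow_add_abs_rpow_le hs x t

theorem koranyiWeight_smul_fourierChar (s x t ξ : ℝ) :
    koranyiWeight s x t • (𝐞 (-(t * ξ)) : ℂ)
      = Complex.exp (-2 * (Real.pi : ℂ) * Complex.I * (t : ℂ) * (ξ : ℂ)) *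
          (((x ^ 4 + t ^ 2) ^ (-(s / 4)) : ℝ) : ℂ) := by
  rw [Complex.real_smul, Real.fourierChar_apply, mul_comm, koranyiWeight]
  congr 2
  push_cast
  ring

end KoranyiWeight

theorem koranyi_t_integral_tail_general {s : ℝ} (hs : 0 < s) {ξ : ℝ} (hξ : ξ ≠ 0) {x : ℝ}
    (_ : x ≠ 0 ∨ s < 3) :
    ∃ L : ℂ,
      Tendsto (fun N : ℝ ↦ ∫ t in (-N)..N,
          Complex.exp (-2 * (Real.pi : ℂ) * Complex.I * (t : ℂ) * (ξ : ℂ)) *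
            (((x ^ 4 + t ^ 2) ^ (-(s / 4)) : ℝ) : ℂ))
        atTop (𝓝 L) ∧
      ∀ N : ℝ, 0 < N →
        ‖L - ∫ t in (-N)..N,
            Complex.exp (-2 * (Real.pi : ℂ) * Complex.I * (t : ℂ) * (ξ : ℂ)) *
              (((x ^ 4 + t ^ 2) ^ (-(s / 4)) : ℝ) : ℂ)‖ ≤
          4 / π / (|ξ| * (|x| ^ s + N ^ (s / 2))) := by
  -- At `x = 0` and `2 ≤ s` the integrals over `[-N, N]` diverge at `t = 0` and are all `0` by
  -- convention, so that `L = 0`.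
  simp only [← koranyiWeight_smul_fourierChar]
  obtain ⟨L, hL, htail⟩ := exists_tendsto_symm_integral_smul_fourierChar hξ
    (even_koranyiWeight s x)
    ((differentiableOn_koranyiWeight s x).mono fun t (ht : 0 < t) ↦ ht.ne')
    (antitoneOn_koranyiWeight hs.le x) (tendsto_koranyiWeight_atTop hs x)
  refine ⟨L, hL, fun N hN ↦ (htail N hN).trans ?_⟩
  have hweight : koranyiWeight s x N ≤ 2 / (|x| ^ s + N ^ (s / 2)) := by
    simpa only [abs_of_pos hN] using koranyiWeight_le hs.le x hN.ne'
  calc 2 * koranyiWeight s x N / (π * |ξ|)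
      ≤ 2 * (2 / (|x| ^ s + N ^ (s / 2))) / (π * |ξ|) := by gcongr
    _ = 4 / π / (|ξ| * (|x| ^ s + N ^ (s / 2))) := by
        field_simp
        norm_num

/-- **Estimate (3.5).** For each `s ∈ (1,3)` there is `C_s > 0` such that for every nonzero
`ξ₂`, every `x ∈ ℝ` and every `N > 0`, the improper Riemann integral
`∫_{-∞}^∞ e^{-2πitξ₂}(x⁴+t²)^{-s/4} dt` (the limit `L` of `∫_{-N}^N` as `N → ∞`) satisfies
`|L - ∫_{-N}^N e^{-2πitξ₂}(x⁴+t²)^{-s/4} dt| ≤ C_s / (|ξ₂| (|x|^s + N^{s/2}))`. -/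
theorem koranyi_t_integral_tail (s : ℝ) (hs : s ∈ Set.Ioo (1 : ℝ) 3) :
    ∃ C : ℝ, 0 < C ∧ ∀ (ξ₂ : ℝ), ξ₂ ≠ 0 → ∀ x : ℝ,
      ∃ L : ℂ,
        Tendsto (fun N : ℝ => ∫ t in (-N)..N,
            Complex.exp (-2 * (Real.pi : ℂ) * Complex.I * (t : ℂ) * (ξ₂ : ℂ)) *
              (((x ^ 4 + t ^ 2) ^ (-(s / 4)) : ℝ) : ℂ))
          atTop (nhds L) ∧
        ∀ N : ℝ, 0 < N →
          ‖L - ∫ t in (-N)..N,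
              Complex.exp (-2 * (Real.pi : ℂ) * Complex.I * (t : ℂ) * (ξ₂ : ℂ)) *
                (((x ^ 4 + t ^ 2) ^ (-(s / 4)) : ℝ) : ℂ)‖ ≤
            C / (|ξ₂| * (|x| ^ s + N ^ (s / 2))) :=
  ⟨4 / π, by positivity, fun _ hξ _ ↦
    koranyi_t_integral_tail_general (zero_lt_one.trans hs.1) hξ (Or.inr hs.2)⟩
end
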